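/- arXiv:2503.01247 — 4 statements merged into one kernel-verified Lean document; each statement's English description precedes it below -/
import Mathlib

section
/- For all σ-structures A and B and every k ∈ ℕ, the following are equivalent: (i) A and B satisfy the same sentences of ⁺FO_k; (ii) there exist objects Z, Z′ of EM(E_k^I) together with morphisms p : Z → F_k^I(A), q : Z → F_k^I(B), p′ : Z′ → F_k^I(B), q′ : Z′ → F_k^I(A) such that p and p′ are open pathwise embeddings and q and q′ are each a composition of a bijection followed by an open pathwise embedding. -/
/-- A relational vocabulary: a type of relation symbols together with their arities. -/
structure Vocab : Type 1 where
  Rel : Type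
  ar : Rel → ℕ

/-- A structure for the relational vocabulary `V` with carrier `α`. -/
structure Str (V : Vocab) (α : Type) : Type where
  rel : ∀ r : V.Rel, (Fin (V.ar r) → α) → Prop
/-- Positive first-order formulas over `V` with free variables among `Fin n`
(de Bruijn style): no negation symbol, both quantifiers allowed. -/
inductive PFml (V : Vocab) : ℕ → Type
  | rel {n : ℕ} (r : V.Rel) (v : Fin (V.ar r) → Fin n) : PFml V n
  | eq {n : ℕ} (i j : Fin n) : PFml V n
  | and {n : ℕ} (φ ψ : PFml V n) : PFml V n
  | or {n : ℕ} (φ ψ : PFml V n) : PFml V n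
  | ex {n : ℕ} (φ : PFml V (n + 1)) : PFml V n
  | all {n : ℕ} (φ : PFml V (n + 1)) : PFml V n

namespace PFml

/-- Quantifier rank. -/
def qr {V : Vocab} : ∀ {n : ℕ}, PFml V n → ℕ
  | _, .rel _ _ => 0
  | _, .eq _ _ => 0
  | _, .and φ ψ => max (qr φ) (qr ψ)
  | _, .or φ ψ => max (qr φ) (qr ψ)
  | _, .ex φ => qr φ + 1
  | _, .all φ => qr φ + 1

/-- Satisfaction in a structure, relative to an environment. -/
def Sat {V : Vocab} {α : Type} (M : Str V α) : ∀ {n : ℕ}, PFml V n → (Fin n → α) → Prop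
  | _, .rel r v, e => M.rel r fun i => e (v i)
  | _, .eq i j, e => e i = e j
  | _, .and φ ψ, e => Sat M φ e ∧ Sat M ψ e
  | _, .or φ ψ, e => Sat M φ e ∨ Sat M ψ e
  | _, .ex φ, e => ∃ a : α, Sat M φ (Fin.snoc e a)
  | _, .all φ, e => ∀ a : α, Sat M φ (Fin.snoc e a)

end PFml
/-- An object datum for the Eilenberg–Moore category `EM(E_k^I)` of the
Ehrenfeucht–Fraïssé comonad over `σ^I = σ ∪ {I}`: a `σ`-structure together with an
interpretation `ieq` of the fresh binary relation symbol `I` and a (forest) order. -/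
structure EObj (V : Vocab) : Type 1 where
  carrier : Type
  rel : ∀ r : V.Rel, (Fin (V.ar r) → carrier) → Prop
  ieq : carrier → carrier → Prop
  le : carrier → carrier → Prop

namespace EObj

variable {V : Vocab}

/-- Gaifman adjacency, with respect to all relations of `σ ∪ {I}`. -/
def Adj (X : EObj V) (x y : X.carrier) : Prop :=
  x ≠ y ∧ ((∃ r v, X.rel r v ∧ (∃ i, v i = x) ∧ (∃ j, v j = y)) ∨ X.ieq x y ∨ X.ieq y x)

/-- The covering relation of the order of `X`. -/
def Cover (X : EObj V) (x y : X.carrier) : Prop :=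
  X.le x y ∧ x ≠ y ∧ ∀ z, X.le x z → X.le z y → z = x ∨ z = y

/-- Roots, i.e. minimal elements of the forest order. -/
def IsRoot (X : EObj V) (x : X.carrier) : Prop := ∀ y, X.le y x → y = x

/-- `X` is (the datum of) a coalgebra for `E_k^I`: a forest-ordered `σ^I`-structure of
height at most `k` in which Gaifman-adjacent elements are comparable. -/
def IsCoalg (k : ℕ) (X : EObj V) : Prop :=
  (∀ x, X.le x x) ∧ (∀ x y z, X.le x y → X.le y z → X.le x z) ∧
  (∀ x y, X.le x y → X.le y x → x = y) ∧
  (∀ x : X.carrier, {y | X.le y x}.Finite ∧ {y | X.le y x}.ncard ≤ k + 1 ∧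
    ∀ y z, X.le y x → X.le z x → X.le y z ∨ X.le z y) ∧
  (∀ x y, X.Adj x y → X.le x y ∨ X.le y x)

/-- Morphisms of `EM(E_k^I)`: homomorphisms of `σ^I`-structures that are also forest
morphisms (they send roots to roots and preserve the covering relation). -/
def IsHom (X Y : EObj V) (f : X.carrier → Y.carrier) : Prop :=
  (∀ r v, X.rel r v → Y.rel r fun i => f (v i)) ∧
  (∀ x y, X.ieq x y → Y.ieq (f x) (f y)) ∧
  (∀ x, X.IsRoot x → Y.IsRoot (f x)) ∧
  (∀ x y, X.Cover x y → Y.Cover (f x) (f y))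

/-- Embeddings: morphisms that are injective and reflect all relations. -/
def IsEmb (X Y : EObj V) (f : X.carrier → Y.carrier) : Prop :=
  IsHom X Y f ∧ Function.Injective f ∧
  (∀ r v, (Y.rel r fun i => f (v i)) → X.rel r v) ∧
  (∀ x y, Y.ieq (f x) (f y) → X.ieq x y)

/-- Paths: objects whose forest order is finite and linear. -/
def IsPath (X : EObj V) : Prop :=
  Finite X.carrier ∧ ∀ x y : X.carrier, X.le x y ∨ X.le y x

/-- Pathwise embeddings: morphisms `f : X → Y` such that for every path embedding
`m : P ↪ X` the composite `f ∘ m` is a path embedding. -/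
def IsPWEmb (k : ℕ) (X Y : EObj V) (f : X.carrier → Y.carrier) : Prop :=
  IsHom X Y f ∧ ∀ P : EObj V, IsCoalg k P → IsPath P →
    ∀ m : P.carrier → X.carrier, IsEmb P X m → IsEmb P Y fun p => f (m p)

/-- Open morphisms: every commutative square of path embeddings over `f` admits a
diagonal filler. -/
def IsOpen (k : ℕ) (X Y : EObj V) (f : X.carrier → Y.carrier) : Prop :=
  ∀ P Q : EObj V, IsCoalg k P → IsPath P → IsCoalg k Q → IsPath Q →
    ∀ (i : P.carrier → Q.carrier) (m : P.carrier → X.carrier)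
      (n : Q.carrier → Y.carrier),
      IsEmb P Q i → IsEmb P X m → IsEmb Q Y n → (∀ x, n (i x) = f (m x)) →
      ∃ d : Q.carrier → X.carrier, IsHom Q X d ∧ (∀ x, d (i x) = m x) ∧ ∀ q, f (d q) = n q

end EObj
/-- The co-free coalgebra `F_k^I(A) = (E_k J(A), ⊑)` on `J(A)`: non-empty sequences of
elements of `A` of length at most `k`, ordered by the prefix order.  A tuple of sequences
is related iff the sequences are pairwise comparable and their last elements are related
in `J(A)`; the fresh relation `I` is interpreted as comparability plus equality of last
elements (the diagonal of `J`). -/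
def FE (V : Vocab) (k : ℕ) {α : Type} (A : Str V α) : EObj V where
  carrier := {l : List α // l ≠ [] ∧ l.length ≤ k}
  rel r v :=
    (∀ i j, (v i).1 <+: (v j).1 ∨ (v j).1 <+: (v i).1) ∧
    A.rel r fun i => (v i).1.getLast (v i).2.1
  ieq s t := ((s.1 <+: t.1) ∨ (t.1 <+: s.1)) ∧ s.1.getLast s.2.1 = t.1.getLast t.2.1
  le s t := s.1 <+: t.1
/-- `q : Z → Y` is the composition of a bijection followed by an open pathwise
embedding, in `EM(E_k^I)`. -/
def BijThenOpenE (V : Vocab) (k : ℕ) (Z Y : EObj V) (q : Z.carrier → Y.carrier) : Prop :=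
  ∃ W : EObj V, EObj.IsCoalg k W ∧
    ∃ (u : Z.carrier → W.carrier) (v : W.carrier → Y.carrier),
      EObj.IsHom Z W u ∧ Function.Bijective u ∧
      EObj.IsPWEmb k W Y v ∧ EObj.IsOpen k W Y v ∧ ∀ z, q z = v (u z)
set_option linter.unusedVariables false

namespace PFSpan

open EObj

section Coalg
variable {V : Vocab} {k : ℕ}

noncomputable def ht (X : EObj V) (x : X.carrier) : ℕ := {y | X.le y x}.ncard

theorem ht_lt {X : EObj V} (hX : IsCoalg k X) {x y : X.carrier} (h : X.le x y) (hne : x ≠ y) :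
    ht X x < ht X y := by
  obtain ⟨hr, ht, ha, hf, -⟩ := hX
  refine Set.ncard_lt_ncard ⟨fun z hz => ht _ _ _ hz h, fun hs => hne ?_⟩ (hf y).1
  exact ha _ _ h (hs (hr y))

theorem exists_cover {X : EObj V} (hX : IsCoalg k X) {x y : X.carrier} (h : X.le x y)
    (hne : x ≠ y) : ∃ z, X.Cover z y := by
  obtain ⟨z, ⟨hz1, hz2⟩, hz⟩ := Set.exists_max_image {z | X.le z y ∧ z ≠ y} (ht X)
    ((hX.2.2.2.1 y).1.subset fun z hz => hz.1) ⟨x, h, hne⟩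
  refine ⟨z, hz1, hz2, fun w hw1 hw2 => ?_⟩
  by_contra hc
  push Not at hc
  have := hz w ⟨hw2, hc.2⟩
  have := ht_lt hX hw1 (Ne.symm hc.1)
  omega

theorem coalg_induction {X : EObj V} (hX : IsCoalg k X) {C : X.carrier → Prop}
    (hroot : ∀ x, X.IsRoot x → C x) (hcov : ∀ z x, X.Cover z x → C z → C x) (x) : C x := by
  induction hn : ht X x using Nat.strong_induction_on generalizing x with
  | _ n ih =>
    by_cases hx : X.IsRoot x
    · exact hroot x hx
    · unfold IsRoot at hx
      push Not at hx
      obtain ⟨y, hy, hne⟩ := hx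
      obtain ⟨z, hz⟩ := exists_cover hX hy hne
      exact hcov z x hz (ih _ (hn ▸ ht_lt hX hz.1 hz.2.1) z rfl)

theorem cover_le {X : EObj V} (hX : IsCoalg k X) {x y z : X.carrier} (hz : X.Cover z y)
    (hx : X.le x y) (hne : x ≠ y) : X.le x z := by
  rcases (hX.2.2.2.1 y).2.2 x z hx hz.1 with h | h
  · exact h
  · rcases hz.2.2 x h hx with h | h
    · exact h ▸ hX.1 x
    · exact absurd h hne

theorem hom_mono {X Y : EObj V} (hX : IsCoalg k X) (hY : IsCoalg k Y) {f : X.carrier → Y.carrier}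
    (hf : IsHom X Y f) {x y : X.carrier} (h : X.le x y) : Y.le (f x) (f y) := by
  refine coalg_induction hX (C := fun y => ∀ x, X.le x y → Y.le (f x) (f y)) ?_ ?_ y x h
  · intro y hy x hx
    rw [hy x hx]; exact hY.1 _
  · intro z y hz ih x hx
    by_cases hne : x = y
    · rw [hne]; exact hY.1 _
    · exact hY.2.1 _ _ _ (ih x (cover_le hX hz hx hne)) (hf.2.2.2 _ _ hz).1

theorem hom_down {X Y : EObj V} (hX : IsCoalg k X) (hY : IsCoalg k Y) {f : X.carrier → Y.carrier}
    (hf : IsHom X Y f) (x : X.carrier) : ∀ y, Y.le y (f x) → ∃ x', X.le x' x ∧ f x' = y := by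
  refine coalg_induction hX (C := fun x => ∀ y, Y.le y (f x) → ∃ x', X.le x' x ∧ f x' = y) ?_ ?_ x
  · intro x hx y hy
    exact ⟨x, hX.1 x, (hf.2.2.1 x hx y hy).symm⟩
  · intro z x hz ih y hy
    by_cases hne : y = f x
    · exact ⟨x, hX.1 x, hne.symm⟩
    · obtain ⟨x', h1, h2⟩ := ih y (cover_le hY (hf.2.2.2 _ _ hz) hy hne)
      exact ⟨x', hX.2.1 _ _ _ h1 hz.1, h2⟩

theorem rank_unique {X : EObj V} (hX : IsCoalg k X) {r s : X.carrier → ℕ}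
    (hr : ∀ x, X.IsRoot x → r x = 1) (hr' : ∀ x y, X.Cover x y → r y = r x + 1)
    (hs : ∀ x, X.IsRoot x → s x = 1) (hs' : ∀ x y, X.Cover x y → s y = s x + 1) (x) :
    r x = s x :=
  coalg_induction hX (C := fun x => r x = s x) (fun x h => (hr x h).trans (hs x h).symm)
    (fun z x h e => by rw [hr' z x h, hs' z x h, e]) x

theorem hom_comp {X Y Z : EObj V} {f : X.carrier → Y.carrier} {g : Y.carrier → Z.carrier}
    (hf : IsHom X Y f) (hg : IsHom Y Z g) : IsHom X Z (fun x => g (f x)) :=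
  ⟨fun r v h => hg.1 r _ (hf.1 r v h), fun x y h => hg.2.1 _ _ (hf.2.1 _ _ h),
    fun x h => hg.2.2.1 _ (hf.2.2.1 _ h), fun x y h => hg.2.2.2 _ _ (hf.2.2.2 _ _ h)⟩

theorem path_max {P : EObj V} (hP : IsCoalg k P) (hp : IsPath P) [Nonempty P.carrier] :
    ∃ p, ∀ x, P.le x p := by
  have := hp.1
  obtain ⟨p, h⟩ := Finite.exists_max (ht P)
  refine ⟨p, fun x => ?_⟩
  rcases hp.2 x p with h1 | h1
  · exact h1
  · by_cases hne : p = x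
    · exact hne ▸ h1
    · have := ht_lt hP h1 hne
      have := h x
      omega

/-- induced subobject -/
def Sub (X : EObj V) (S : Set X.carrier) : EObj V where
  carrier := S
  rel r v := X.rel r fun i => (v i).1
  ieq x y := X.ieq x.1 y.1
  le x y := X.le x.1 y.1

theorem sub_coalg {X : EObj V} (hX : IsCoalg k X) (S : Set X.carrier) : IsCoalg k (Sub X S) := by
  obtain ⟨hr, ht, ha, hf, hg⟩ := hX
  refine ⟨fun x => hr _, fun x y z => ht _ _ _, fun x y h1 h2 => Subtype.ext (ha _ _ h1 h2),
    fun x => ⟨?_, ?_, fun y z => (hf x.1).2.2 y.1 z.1⟩, ?_⟩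
  · exact Set.Finite.of_injOn (f := Subtype.val) (t := {y | X.le y x.1}) (fun y hy => hy)
      Subtype.val_injective.injOn (hf x.1).1
  · exact (Set.ncard_le_ncard_of_injOn (t := {y | X.le y x.1}) Subtype.val (fun y hy => hy)
      Subtype.val_injective.injOn (hf x.1).1).trans (hf x.1).2.1
  · rintro x y ⟨hne, h⟩
    refine hg x.1 y.1 ⟨fun h => hne (Subtype.ext h), ?_⟩
    rcases h with ⟨r, v, h1, ⟨i, hi⟩, j, hj⟩ | h
    · exact Or.inl ⟨r, _, h1, ⟨i, by rw [hi]⟩, j, by rw [hj]⟩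
    · exact Or.inr h

theorem sub_root {X : EObj V} {S : Set X.carrier}
    (hS : ∀ x y, X.le x y → y ∈ S → x ∈ S) (x : S) : (Sub X S).IsRoot x ↔ X.IsRoot x.1 :=
  ⟨fun h y hy => congrArg Subtype.val (h ⟨y, hS _ _ hy x.2⟩ hy),
    fun h y hy => Subtype.ext (h y.1 hy)⟩

theorem sub_cover {X : EObj V} {S : Set X.carrier}
    (hS : ∀ x y, X.le x y → y ∈ S → x ∈ S) (x y : S) :
    (Sub X S).Cover x y ↔ X.Cover x.1 y.1 := by
  constructor
  · rintro ⟨h1, h2, h3⟩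
    refine ⟨h1, fun h => h2 (Subtype.ext h), fun z hz1 hz2 => ?_⟩
    rcases h3 ⟨z, hS _ _ hz2 y.2⟩ hz1 hz2 with h | h
    · exact Or.inl (congrArg Subtype.val h)
    · exact Or.inr (congrArg Subtype.val h)
  · rintro ⟨h1, h2, h3⟩
    refine ⟨h1, fun h => h2 (congrArg Subtype.val h), fun z hz1 hz2 => ?_⟩
    rcases h3 z.1 hz1 hz2 with h | h
    · exact Or.inl (Subtype.ext h)
    · exact Or.inr (Subtype.ext h)

theorem sub_emb {X : EObj V} {S : Set X.carrier}
    (hS : ∀ x y, X.le x y → y ∈ S → x ∈ S) : IsEmb (Sub X S) X Subtype.val :=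
  ⟨⟨fun _ _ h => h, fun _ _ h => h, fun x h => (sub_root hS x).1 h,
    fun x y h => (sub_cover hS x y).1 h⟩, Subtype.val_injective, fun _ _ h => h, fun _ _ h => h⟩

theorem sub_factor {P X : EObj V} {S : Set X.carrier}
    (hS : ∀ x y, X.le x y → y ∈ S → x ∈ S) {f : P.carrier → X.carrier} (hf : IsEmb P X f)
    (h : ∀ x, f x ∈ S) : IsEmb P (Sub X S) (fun x => ⟨f x, h x⟩) :=
  ⟨⟨fun r v hv => hf.1.1 r v hv, fun x y hv => hf.1.2.1 x y hv,
    fun x hx => (sub_root hS _).2 (hf.1.2.2.1 x hx),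
    fun x y hx => (sub_cover hS _ _).2 (hf.1.2.2.2 x y hx)⟩,
    fun x y e => hf.2.1 (congrArg Subtype.val e), fun r v hv => hf.2.2.1 r v hv,
    fun x y hv => hf.2.2.2 x y hv⟩

end Coalg

section ListForest
variable {V : Vocab} {k : ℕ} {γ : Type}

structure LF (k : ℕ) (X : EObj V) (c : X.carrier → List γ) : Prop where
  inj : Function.Injective c
  le : ∀ x y, X.le x y ↔ c x <+: c y
  ne : ∀ x, c x ≠ []
  len : ∀ x, (c x).length ≤ k
  down : ∀ x l, l ≠ [] → l <+: c x → ∃ y, c y = l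
  rel : ∀ r v, X.rel r v → ∀ i j, c (v i) <+: c (v j) ∨ c (v j) <+: c (v i)
  ieq : ∀ x y, X.ieq x y → c x <+: c y ∨ c y <+: c x

variable {X : EObj V} {c : X.carrier → List γ}

theorem LF.coalg (h : LF k X c) : IsCoalg k X := by
  have hinj : ∀ x, Set.InjOn (fun y => (c y).length) {y | X.le y x} := by
    intro x y hy z hz e
    have hy := (h.le _ _).1 hy
    have hz := (h.le _ _).1 hz
    exact h.inj ((List.prefix_of_prefix_length_le hy hz e.le).eq_of_length e)
  have hmaps : ∀ x, ∀ y ∈ {y | X.le y x}, (c y).length ∈ Set.Iio (k+1) :=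
    fun x y _ => Nat.lt_succ_of_le (h.len y)
  refine ⟨fun x => (h.le _ _).2 List.prefix_rfl,
    fun x y z h1 h2 => (h.le _ _).2 (((h.le _ _).1 h1).trans ((h.le _ _).1 h2)),
    fun x y h1 h2 => h.inj (((h.le _ _).1 h1).eq_of_length_le ((h.le _ _).1 h2).length_le),
    fun x => ⟨Set.Finite.of_injOn (hmaps x) (hinj x) (Set.finite_Iio _), ?_, ?_⟩, ?_⟩
  · refine (Set.ncard_le_ncard_of_injOn _ (hmaps x) (hinj x) (Set.finite_Iio _)).trans ?_
    simp
  · intro y z hy hz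
    simp only [h.le] at *
    exact List.prefix_or_prefix_of_prefix hy hz
  · rintro x y ⟨-, h1⟩
    simp only [h.le]
    rcases h1 with ⟨r, v, hv, ⟨i, rfl⟩, j, rfl⟩ | h1 | h1
    · exact h.rel r v hv i j
    · exact h.ieq _ _ h1
    · exact (h.ieq _ _ h1).symm

theorem LF.root (h : LF k X c) (x) : X.IsRoot x ↔ (c x).length = 1 := by
  constructor
  · intro hx
    have hpos := List.length_pos_iff.2 (h.ne x)
    obtain ⟨y, hy⟩ := h.down x ((c x).take 1) (by
      intro e; have := congrArg List.length e; simp at this; exact h.ne x this) (List.take_prefix _ _)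
    have := hx y ((h.le _ _).2 (hy ▸ List.take_prefix _ _))
    subst this
    rw [hy, List.length_take]; omega
  · intro hx y hy
    have hy := (h.le _ _).1 hy
    have := List.length_pos_iff.2 (h.ne y)
    exact h.inj (hy.eq_of_length_le (by omega))

theorem LF.cover (h : LF k X c) (x y) :
    X.Cover x y ↔ c x <+: c y ∧ (c y).length = (c x).length + 1 := by
  constructor
  · rintro ⟨h1, h2, h3⟩
    have h1 := (h.le _ _).1 h1
    refine ⟨h1, ?_⟩
    have hlt : (c x).length < (c y).length := by
      by_contra hc
      exact h2 (h.inj (h1.eq_of_length_le (by omega)))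
    have hl : ((c y).take ((c x).length + 1)).length = (c x).length + 1 := by
      rw [List.length_take]; omega
    obtain ⟨z, hz⟩ := h.down y ((c y).take ((c x).length + 1)) (by
      intro e; rw [e] at hl; simp at hl) (List.take_prefix _ _)
    rcases h3 z ((h.le _ _).2 (by
        rw [hz]; exact List.prefix_of_prefix_length_le h1 (List.take_prefix _ _) (by omega)))
      ((h.le _ _).2 (hz ▸ List.take_prefix _ _)) with e | e
    · subst e
      rw [← hz] at hl
      omega
    · subst e
      rw [← hz] at hl
      exact hl
  · rintro ⟨h1, h2⟩
    refine ⟨(h.le _ _).2 h1, ?_, ?_⟩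
    · rintro rfl; omega
    · intro z hz1 hz2
      rw [h.le] at hz1 hz2
      by_cases hl : (c z).length ≤ (c x).length
      · exact Or.inl (h.inj (hz1.eq_of_length_le hl).symm)
      · exact Or.inr (h.inj (hz2.eq_of_length_le (by omega)))

theorem FE_LF {α : Type} (A : Str V α) :
    LF k (FE V k A) (fun x : (FE V k A).carrier => x.1) where
  inj := Subtype.val_injective
  le _ _ := Iff.rfl
  ne x := x.2.1
  len x := x.2.2
  down x l hl h := ⟨⟨l, hl, h.length_le.trans x.2.2⟩, rfl⟩
  rel _ _ h := h.1
  ieq _ _ h := h.1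

/-- tree of lists in `G`, with structure pulled back along `f` -/
def T (k : ℕ) {α : Type} (A : Str V α) (f : γ → α) (G : List γ → Prop) : EObj V where
  carrier := {l : List γ // l ≠ [] ∧ l.length ≤ k ∧ G l}
  rel r v :=
    (∀ i j, (v i).1 <+: (v j).1 ∨ (v j).1 <+: (v i).1) ∧
    A.rel r fun i => f ((v i).1.getLast (v i).2.1)
  ieq s t := ((s.1 <+: t.1) ∨ (t.1 <+: s.1)) ∧
    f (s.1.getLast s.2.1) = f (t.1.getLast t.2.1)
  le s t := s.1 <+: t.1

variable {α : Type} (A : Str V α) (f : γ → α) {G : List γ → Prop}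

theorem T_LF (hG : ∀ l l', l <+: l' → G l' → G l) :
    LF k (T k A f G) (fun x : (T k A f G).carrier => x.1) where
  inj := Subtype.val_injective
  le _ _ := Iff.rfl
  ne x := x.2.1
  len x := x.2.2.1
  down x l hl h := ⟨⟨l, hl, h.length_le.trans x.2.2.1, hG _ _ h x.2.2.2⟩, rfl⟩
  rel _ _ h := h.1
  ieq _ _ h := h.1

def Tmap (x : (T k A f G).carrier) : (FE V k A).carrier :=
  ⟨x.1.map f, by simpa using x.2.1, by simpa using x.2.2.1⟩

theorem Tmap_hom (hG : ∀ l l', l <+: l' → G l' → G l) :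
    IsHom (T k A f G) (FE V k A) (Tmap A f) := by
  have hT := T_LF (k := k) A f hG
  have hF := FE_LF (k := k) A
  refine ⟨?_, ?_, ?_, ?_⟩
  · rintro r v ⟨h1, h2⟩
    refine ⟨fun i j => (h1 i j).imp (fun h => h.map f) (fun h => h.map f), ?_⟩
    simpa [Tmap] using h2
  · rintro x y ⟨h1, h2⟩
    refine ⟨h1.imp (fun h => h.map f) (fun h => h.map f), ?_⟩
    simpa [Tmap] using h2
  · intro x hx
    rw [hT.root] at hx
    rw [hF.root]
    simpa [Tmap] using hx
  · intro x y hx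
    rw [hT.cover] at hx
    rw [hF.cover]
    exact ⟨hx.1.map f, by simpa [Tmap] using hx.2⟩

theorem Tmap_pw (hG : ∀ l l', l <+: l' → G l' → G l) :
    IsPWEmb k (T k A f G) (FE V k A) (Tmap A f) := by
  have hT := T_LF (k := k) A f hG
  refine ⟨Tmap_hom A f hG, fun P hP hp m hm => ?_⟩
  have hc : ∀ x y, (m x).1 <+: (m y).1 ∨ (m y).1 <+: (m x).1 := fun x y =>
    (hp.2 x y).imp (fun h => hom_mono hP hT.coalg hm.1 h) (fun h => hom_mono hP hT.coalg hm.1 h)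
  refine ⟨hom_comp hm.1 (Tmap_hom A f hG), ?_, ?_, ?_⟩
  · intro x y e
    have e : (m x).1.map f = (m y).1.map f := congrArg Subtype.val e
    have e := congrArg List.length e
    simp only [List.length_map] at e
    apply hm.2.1
    apply Subtype.ext
    rcases hc x y with h | h
    · exact h.eq_of_length e
    · exact (h.eq_of_length e.symm).symm
  · rintro r v ⟨-, h⟩
    refine hm.2.2.1 r v ⟨fun i j => hc _ _, ?_⟩
    simpa [Tmap] using h
  · rintro x y ⟨-, h⟩
    refine hm.2.2.2 x y ⟨hc _ _, ?_⟩
    simpa [Tmap] using h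

theorem ext_list (hE : ∀ l, G l → l.length < k → ∀ a, ∃ c, f c = a ∧ G (l ++ [c]))
    (s : List α) : ∀ l, G l → l.length + s.length ≤ k →
    ∃ l', G (l ++ l') ∧ l'.map f = s := by
  induction s with
  | nil => intro l hl _; exact ⟨[], by simpa using hl, rfl⟩
  | cons a s ih =>
    intro l hl hk
    simp only [List.length_cons] at hk
    obtain ⟨c, hc, hg⟩ := hE l hl (by omega) a
    obtain ⟨l', h1, h2⟩ := ih _ hg (by simp; omega)
    exact ⟨c :: l', by simpa using h1, by simp [hc, h2]⟩

theorem Tmap_open (hG : ∀ l l', l <+: l' → G l' → G l) (hG0 : G [])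
    (hE : ∀ l, G l → l.length < k → ∀ a, ∃ c, f c = a ∧ G (l ++ [c])) :
    IsOpen k (T k A f G) (FE V k A) (Tmap A f) := by
  have hT := T_LF (k := k) A f hG
  have hF := FE_LF (k := k) A
  intro P Q hP hp hQ hq i m n hi hm hn hcomm
  rcases isEmpty_or_nonempty Q.carrier with hQe | hQn
  · exact ⟨fun q => hQe.elim q, ⟨fun r v h => (by
        by_cases h0 : V.ar r = 0
        · exact ⟨fun i => (Fin.elim0 (h0 ▸ i)), (by
            have := (hn.1.1 r v h).2
            convert this using 1
            funext i; exact Fin.elim0 (h0 ▸ i))⟩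
        · exact hQe.elim (v ⟨0, Nat.pos_of_ne_zero h0⟩)),
      fun x => hQe.elim x, fun x => hQe.elim x, fun x => hQe.elim x⟩,
      fun x => hQe.elim (i x), fun q => hQe.elim q⟩
  obtain ⟨qm, hqm⟩ := path_max hQ hq
  have hnq : ∀ q, (n q).1 <+: (n qm).1 := fun q => hom_mono hQ hF.coalg hn.1 (hqm q)
  obtain ⟨l0, hl0, hml0, hfl0⟩ : ∃ l0, G l0 ∧ (∀ x, (m x).1 <+: l0) ∧ l0.map f <+: (n qm).1 := by
    rcases isEmpty_or_nonempty P.carrier with hPe | hPn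
    · exact ⟨[], hG0, fun x => hPe.elim x, by simp⟩
    · obtain ⟨pm, hpm⟩ := path_max hP hp
      refine ⟨(m pm).1, (m pm).2.2.2, fun x => hom_mono hP hT.coalg hm.1 (hpm x), ?_⟩
      have := hnq (i pm)
      rw [hcomm] at this
      exact this
  obtain ⟨s, hs⟩ := hfl0
  obtain ⟨l', hl', hs'⟩ := ext_list (k := k) f hE s l0 hl0 (by
    have := (n qm).2.2
    rw [← hs] at this
    simpa using this)
  set L := l0 ++ l' with hL
  have hLm : L.map f = (n qm).1 := by rw [hL, List.map_append, hs', hs]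
  have hLlen : L.length = (n qm).1.length := by rw [← hLm, List.length_map]
  have hdl : ∀ q, (L.take (n q).1.length).length = (n q).1.length := by
    intro q
    have := (hnq q).length_le
    rw [List.length_take]; omega
  have hdm : ∀ q, (L.take (n q).1.length).map f = (n q).1 := by
    intro q
    rw [List.map_take, hLm]
    exact (List.prefix_iff_eq_take.1 (hnq q)).symm
  let d : Q.carrier → (T k A f G).carrier := fun q => ⟨L.take (n q).1.length, by
    intro e
    have := hdl q
    rw [e] at this
    exact (n q).2.1 (List.length_eq_zero_iff.1 this.symm), by
    rw [hdl]; exact (n q).2.2, hG _ _ (List.take_prefix _ _) hl'⟩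
  have hfd : ∀ q, Tmap A f (d q) = n q := fun q => Subtype.ext (hdm q)
  have hdc : ∀ q q', (d q).1 <+: (d q').1 ∨ (d q').1 <+: (d q).1 := fun q q' =>
    List.prefix_or_prefix_of_prefix (List.take_prefix _ _) (List.take_prefix _ _)
  have hlast : ∀ q, f ((d q).1.getLast (d q).2.1) = (n q).1.getLast (n q).2.1 := by
    intro q
    have h1 : (Tmap A f (d q)).1.getLast (Tmap A f (d q)).2.1 = f ((d q).1.getLast (d q).2.1) := by
      simp [Tmap]
    rw [← h1]
    simp only [hfd]
  refine ⟨d, ⟨?_, ?_, ?_, ?_⟩, ?_, hfd⟩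
  · intro r v hv
    refine ⟨fun i j => hdc _ _, ?_⟩
    simp only [hlast]
    exact (hn.1.1 r v hv).2
  · intro x y hv
    refine ⟨hdc _ _, ?_⟩
    simp only [hlast]
    exact (hn.1.2.1 x y hv).2
  · intro x hx
    have := (hF.root _).1 (hn.1.2.2.1 x hx)
    exact (hT.root _).2 ((hdl x).trans this)
  · intro x y hx
    have := (hF.cover _ _).1 (hn.1.2.2.2 x y hx)
    have hl : (d y).1.length = (d x).1.length + 1 := by
      rw [show (d y).1.length = _ from hdl y, show (d x).1.length = _ from hdl x]
      exact this.2
    exact (hT.cover _ _).2 ⟨List.prefix_of_prefix_length_le (List.take_prefix _ _)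
      (List.take_prefix _ _) (by have : (d x).1.length ≤ (d y).1.length := by omega
                                 exact this), hl⟩
  · intro x
    apply Subtype.ext
    have h1 : (m x).1 <+: L := (hml0 x).trans (List.prefix_append _ _)
    have h2 : (n (i x)).1.length = (m x).1.length := by
      rw [hcomm]; simp [Tmap]
    change L.take (n (i x)).1.length = (m x).1
    rw [h2]
    exact (List.prefix_iff_eq_take.1 h1).symm

end ListForest

section Logic
variable {V : Vocab} {α β : Type} (A : Str V α) (B : Str V β)

abbrev Tv (α β : Type) (n : ℕ) : Type := Set (Fin n → α) × Set (Fin n → β)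

def truth {n : ℕ} (φ : PFml V n) : Tv α β n := ({e | φ.Sat A e}, {e | φ.Sat B e})

def exT {n : ℕ} (t : Tv α β (n+1)) : Tv α β n :=
  ({e | ∃ a : α, (Fin.snoc e a : Fin (n+1) → α) ∈ t.1},
   {e | ∃ a : β, (Fin.snoc e a : Fin (n+1) → β) ∈ t.2})

def allT {n : ℕ} (t : Tv α β (n+1)) : Tv α β n :=
  ({e | ∀ a : α, (Fin.snoc e a : Fin (n+1) → α) ∈ t.1},
   {e | ∀ a : β, (Fin.snoc e a : Fin (n+1) → β) ∈ t.2})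

def D (m n : ℕ) : Set (Tv α β n) := truth A B '' {φ : PFml V n | φ.qr ≤ m}

def Bs (m n : ℕ) (S : Set (Tv α β (n+1))) : Set (Tv α β n) :=
  (Set.range fun x : (Σ r : V.Rel, Fin (V.ar r) → Fin n) => truth A B (PFml.rel x.1 x.2)) ∪
  (Set.range fun x : Fin n × Fin n => truth A B (PFml.eq x.1 x.2)) ∪
  ((exT '' S) ∪ (allT '' S))

theorem truth_mem (m n : ℕ) (S : Set (Tv α β (n+1)))
    (hS : ∀ φ : PFml V (n+1), φ.qr + 1 ≤ m → truth A B φ ∈ S) :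
    ∀ φ : PFml V n, φ.qr ≤ m → truth A B φ ∈ latticeClosure (Bs A B m n S)
  | .rel r v, _ => subset_latticeClosure (Or.inl (Or.inl ⟨⟨r, v⟩, rfl⟩))
  | .eq i j, _ => subset_latticeClosure (Or.inl (Or.inr ⟨⟨i, j⟩, rfl⟩))
  | .and φ ψ, h => by
    have h : max φ.qr ψ.qr ≤ m := h
    have h1 := truth_mem m n S hS φ ((le_max_left _ _).trans h)
    have h2 := truth_mem m n S hS ψ ((le_max_right _ _).trans h)
    exact isSublattice_latticeClosure.infClosed h1 h2
  | .or φ ψ, h => by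
    have h : max φ.qr ψ.qr ≤ m := h
    have h1 := truth_mem m n S hS φ ((le_max_left _ _).trans h)
    have h2 := truth_mem m n S hS ψ ((le_max_right _ _).trans h)
    exact isSublattice_latticeClosure.supClosed h1 h2
  | .ex φ, h => subset_latticeClosure (Or.inr (Or.inl ⟨truth A B φ, hS φ h, rfl⟩))
  | .all φ, h => subset_latticeClosure (Or.inr (Or.inr ⟨truth A B φ, hS φ h, rfl⟩))

theorem D_finite [Finite V.Rel] (m : ℕ) : ∀ n, (D A B m n).Finite := by
  induction m with
  | zero =>
    intro n
    refine Set.Finite.subset (s := latticeClosure (Bs A B 0 n ∅)) ?_ ?_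
    · apply Set.Finite.latticeClosure
      unfold Bs
      simp only [Set.image_empty, Set.union_empty]
      exact (Set.finite_range _).union (Set.finite_range _)
    · rintro _ ⟨φ, h, rfl⟩
      exact truth_mem A B 0 n ∅ (fun φ h => absurd h (by omega)) φ h
  | succ m ih =>
    intro n
    refine Set.Finite.subset (s := latticeClosure (Bs A B (m+1) n (D A B m (n+1)))) ?_ ?_
    · apply Set.Finite.latticeClosure
      unfold Bs
      exact ((Set.finite_range _).union (Set.finite_range _)).union
        (((ih _).image _).union ((ih _).image _))
    · rintro _ ⟨φ, h, rfl⟩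
      exact truth_mem A B (m+1) n (D A B m (n+1)) (fun φ h => ⟨φ, Nat.le_of_succ_le_succ h, rfl⟩) φ h

theorem conj [Finite V.Rel] {m n : ℕ} (Γ : Set (PFml V n)) (hΓ : ∀ φ ∈ Γ, φ.qr ≤ m)
    (hne : Γ.Nonempty) : ∃ ψ : PFml V n, ψ.qr ≤ m ∧ (∀ e, ψ.Sat A e ↔ ∀ φ ∈ Γ, φ.Sat A e) ∧
      (∀ e, ψ.Sat B e ↔ ∀ φ ∈ Γ, φ.Sat B e) := by
  have hfin : (truth A B '' Γ).Finite := (D_finite A B m n).subset (Set.image_mono hΓ)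
  have key : ∀ T : Set (Tv α β n), T.Finite → T ⊆ truth A B '' Γ → T.Nonempty →
      ∃ ψ : PFml V n, ψ.qr ≤ m ∧ truth A B ψ = sInf T := by
    intro T hT
    induction T, hT using Set.Finite.induction_on with
    | empty => intro _ h; exact absurd h (by simp)
    | @insert a s ha hs ih =>
      intro hsub _
      obtain ⟨φ, hφ, rfl⟩ := hsub (Set.mem_insert _ _)
      rcases s.eq_empty_or_nonempty with rfl | hsne
      · exact ⟨φ, hΓ φ hφ, by simp⟩
      · obtain ⟨ψ, h1, h2⟩ := ih ((Set.subset_insert _ _).trans hsub) hsne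
        refine ⟨.and φ ψ, max_le (hΓ φ hφ) h1, ?_⟩
        rw [sInf_insert, ← h2]; rfl
  obtain ⟨ψ, h1, h2⟩ := key _ hfin subset_rfl (hne.image _)
  refine ⟨ψ, h1, fun e => ?_, fun e => ?_⟩
  · have := congrArg (fun t => e ∈ t.1) h2
    simp only [Prod.fst_sInf, truth, Set.sInf_eq_sInter, Set.image_image, Set.sInter_image,
      Set.mem_iInter, Set.mem_ofPred_eq, eq_iff_iff] at this
    exact this
  · have := congrArg (fun t => e ∈ t.2) h2
    simp only [Prod.snd_sInf, truth, Set.sInf_eq_sInter, Set.image_image, Set.sInter_image,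
      Set.mem_iInter, Set.mem_ofPred_eq, eq_iff_iff] at this
    exact this

theorem disj [Finite V.Rel] {m n : ℕ} (Γ : Set (PFml V n)) (hΓ : ∀ φ ∈ Γ, φ.qr ≤ m)
    (hne : Γ.Nonempty) : ∃ ψ : PFml V n, ψ.qr ≤ m ∧ (∀ e, ψ.Sat A e ↔ ∃ φ ∈ Γ, φ.Sat A e) ∧
      (∀ e, ψ.Sat B e ↔ ∃ φ ∈ Γ, φ.Sat B e) := by
  have hfin : (truth A B '' Γ).Finite := (D_finite A B m n).subset (Set.image_mono hΓ)
  have key : ∀ T : Set (Tv α β n), T.Finite → T ⊆ truth A B '' Γ → T.Nonempty →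
      ∃ ψ : PFml V n, ψ.qr ≤ m ∧ truth A B ψ = sSup T := by
    intro T hT
    induction T, hT using Set.Finite.induction_on with
    | empty => intro _ h; exact absurd h (by simp)
    | @insert a s ha hs ih =>
      intro hsub _
      obtain ⟨φ, hφ, rfl⟩ := hsub (Set.mem_insert _ _)
      rcases s.eq_empty_or_nonempty with rfl | hsne
      · exact ⟨φ, hΓ φ hφ, by simp⟩
      · obtain ⟨ψ, h1, h2⟩ := ih ((Set.subset_insert _ _).trans hsub) hsne
        refine ⟨.or φ ψ, max_le (hΓ φ hφ) h1, ?_⟩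
        rw [sSup_insert, ← h2]; rfl
  obtain ⟨ψ, h1, h2⟩ := key _ hfin subset_rfl (hne.image _)
  refine ⟨ψ, h1, fun e => ?_, fun e => ?_⟩
  · have := congrArg (fun t => e ∈ t.1) h2
    simp only [Prod.fst_sSup, truth, Set.sSup_eq_sUnion, Set.image_image, Set.sUnion_image,
      Set.mem_iUnion, Set.mem_ofPred_eq, eq_iff_iff, exists_prop] at this
    exact this
  · have := congrArg (fun t => e ∈ t.2) h2
    simp only [Prod.snd_sSup, truth, Set.sSup_eq_sUnion, Set.image_image, Set.sUnion_image,
      Set.mem_iUnion, Set.mem_ofPred_eq, eq_iff_iff, exists_prop] at this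
    exact this

def Win (k n : ℕ) (e : Fin n → α) (e' : Fin n → β) : Prop :=
  ∀ φ : PFml V n, n + φ.qr ≤ k → φ.Sat A e → φ.Sat B e'

variable {A B}

theorem Win.forth [Finite V.Rel] {k n : ℕ} {e : Fin n → α} {e' : Fin n → β} (h : Win A B k n e e')
    (hn : n < k) (a : α) :
    ∃ b : β, Win A B k (n+1) (Fin.snoc e a : Fin (n+1) → α) (Fin.snoc e' b : Fin (n+1) → β) := by
  obtain ⟨ψ, h1, h2, h3⟩ := conj A B (m := k - (n+1))
    {φ : PFml V (n+1) | φ.qr ≤ k - (n+1) ∧ φ.Sat A (Fin.snoc e a : Fin (n+1) → α)}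
    (fun φ h => h.1) ⟨.eq 0 0, Nat.zero_le _, rfl⟩
  obtain ⟨b, hb⟩ := h (.ex ψ) (by simp only [PFml.qr]; omega)
    ⟨a, (h2 _).2 fun φ h => h.2⟩
  exact ⟨b, fun φ hφ hs => (h3 _).1 hb φ ⟨by omega, hs⟩⟩

theorem Win.back [Finite V.Rel] [Nonempty α] {k n : ℕ} {e : Fin n → α} {e' : Fin n → β}
    (h : Win A B k n e e') (hn : n < k) (b : β) :
    ∃ a : α, Win A B k (n+1) (Fin.snoc e a : Fin (n+1) → α) (Fin.snoc e' b : Fin (n+1) → β) := by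
  by_contra hc
  simp only [Win] at hc
  push Not at hc
  choose F hF1 hF2 hF3 using hc
  obtain ⟨ψ, h1, h2, h3⟩ := disj A B (m := k - (n+1)) (Set.range F)
    (by rintro _ ⟨a, rfl⟩; have := hF1 a; omega) (Set.range_nonempty F)
  have := h (.all ψ) (by simp only [PFml.qr]; omega) (fun a => (h2 _).2 ⟨F a, ⟨a, rfl⟩, hF2 a⟩) b
  obtain ⟨_, ⟨a, rfl⟩, h⟩ := (h3 _).1 this
  exact hF3 a h

def WinL (A : Str V α) (B : Str V β) (k : ℕ) (l : List (α × β)) : Prop :=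
  ∀ n (h : n = l.length), Win A B k n (fun i => (l[i.1]'(h ▸ i.2)).1)
    (fun i => (l[i.1]'(h ▸ i.2)).2)

def Good (A : Str V α) (B : Str V β) (k : ℕ) (l : List (α × β)) : Prop :=
  ∀ l', l' <+: l → WinL A B k l'

theorem snoc_env {γ δ : Type} (g : γ → δ) (l : List γ) (c : γ) (n : ℕ) (h : n = l.length) :
    (Fin.snoc (fun i : Fin n => g (l[i.1]'(h ▸ i.2))) (g c) : Fin (n+1) → δ) =
      fun i => g ((l ++ [c])[i.1]'(by have := i.2; simp; omega)) := by
  funext i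
  refine Fin.lastCases ?_ (fun j => ?_) i
  · subst h; simp
  · have := j.2
    simp only [Fin.snoc_castSucc, Fin.val_castSucc]
    rw [List.getElem_append_left (by omega)]

theorem Good.snoc {k : ℕ} {l : List (α × β)} (h : Good A B k l) (a : α) (b : β)
    (hw : Win A B k (l.length+1)
      (Fin.snoc (fun i : Fin l.length => (l[i.1]).1) a : Fin (l.length+1) → α)
      (Fin.snoc (fun i : Fin l.length => (l[i.1]).2) b : Fin (l.length+1) → β)) :
    Good A B k (l ++ [(a, b)]) := by
  intro l' hl'
  rcases List.prefix_concat_iff.1 hl' with rfl | hl'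
  · intro n hn
    have hn : n = l.length + 1 := by simpa using hn
    subst hn
    have e1 := snoc_env Prod.fst l (a, b) l.length rfl
    have e2 := snoc_env Prod.snd l (a, b) l.length rfl
    rw [← e1, ← e2]
    exact hw
  · exact h _ hl'

theorem getLast_prefix {γ : Type} {l l' : List γ} (h : l <+: l') (hne : l ≠ []) :
    ∃ hl : l.length - 1 < l'.length, l.getLast hne = l'[l.length - 1] := by
  have := h.length_le
  have h2 := List.length_pos_iff.2 hne
  refine ⟨by omega, ?_⟩
  rw [List.getLast_eq_getElem]
  exact h.getElem (by omega)

theorem make_span [Finite V.Rel] (har : ∀ r : V.Rel, V.ar r ≠ 0) [Nonempty α] {k : ℕ}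
    (h : ∀ φ : PFml V 0, φ.qr ≤ k → φ.Sat A (fun i => i.elim0) → φ.Sat B (fun i => i.elim0)) :
    ∃ Z : EObj V, IsCoalg k Z ∧
      ∃ (p : Z.carrier → (FE V k A).carrier) (q : Z.carrier → (FE V k B).carrier),
        IsPWEmb k Z (FE V k A) p ∧ IsOpen k Z (FE V k A) p ∧ BijThenOpenE V k Z (FE V k B) q := by
  have hG : ∀ l l', l <+: l' → Good A B k l' → Good A B k l := fun l l' h1 h2 l'' h3 =>
    h2 _ (h3.trans h1)
  have hG0 : Good A B k [] := by
    intro l hl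
    rw [List.prefix_nil] at hl
    subst hl
    intro n hn
    have hn : n = 0 := hn
    subst hn
    intro φ hφ hs
    have := h φ (by omega) (by convert hs using 1)
    convert this using 1
  have hE1 : ∀ l, Good A B k l → l.length < k → ∀ a, ∃ c : α × β, c.1 = a ∧
      Good A B k (l ++ [c]) := by
    intro l hl hk a
    obtain ⟨b, hb⟩ := (hl l List.prefix_rfl _ rfl).forth hk a
    exact ⟨(a, b), rfl, hl.snoc a b hb⟩
  have hE2 : ∀ l, Good A B k l → l.length < k → ∀ b, ∃ c : α × β, c.2 = b ∧
      Good A B k (l ++ [c]) := by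
    intro l hl hk b
    obtain ⟨a, ha⟩ := (hl l List.prefix_rfl _ rfl).back hk b
    exact ⟨(a, b), rfl, hl.snoc a b ha⟩
  have hZ := T_LF (k := k) A Prod.fst hG
  have hW := T_LF (k := k) B Prod.snd hG
  refine ⟨T k A Prod.fst (Good A B k), hZ.coalg, Tmap A Prod.fst, Tmap B Prod.snd,
    Tmap_pw A _ hG, Tmap_open A _ hG hG0 hE1, T k B Prod.snd (Good A B k), hW.coalg, id,
    Tmap B Prod.snd, ⟨?_, ?_, ?_, ?_⟩, Function.bijective_id, Tmap_pw B _ hG,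
    Tmap_open B _ hG hG0 hE2, fun _ => rfl⟩
  · rintro r v ⟨h1, h2⟩
    refine ⟨h1, ?_⟩
    have : Nonempty (Fin (V.ar r)) := ⟨⟨0, Nat.pos_of_ne_zero (har r)⟩⟩
    obtain ⟨i0, hi0⟩ := Finite.exists_max fun i => (v i).1.length
    have hp : ∀ i, (v i).1 <+: (v i0).1 := by
      intro i
      rcases h1 i i0 with h | h
      · exact h
      · rw [h.eq_of_length_le (hi0 i)]
    choose hl hg using fun i => getLast_prefix (hp i) (v i).2.1
    have := (v i0).2.2.2 _ List.prefix_rfl _ rfl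
      (.rel r fun i => ⟨(v i).1.length - 1, hl i⟩) (by
        simpa [PFml.qr] using (v i0).2.2.1)
    simp only [PFml.Sat, ← hg] at this
    exact this h2
  · rintro x y ⟨h1, h2⟩
    refine ⟨h1, ?_⟩
    have key : ∀ x y : (T k A Prod.fst (Good A B k)).carrier, x.1 <+: y.1 →
        (x.1.getLast x.2.1).1 = (y.1.getLast y.2.1).1 →
        (x.1.getLast x.2.1).2 = (y.1.getLast y.2.1).2 := by
      intro x y h h2
      obtain ⟨hl1, hg1⟩ := getLast_prefix h x.2.1
      obtain ⟨hl2, hg2⟩ := getLast_prefix List.prefix_rfl y.2.1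
      have := y.2.2.2 _ List.prefix_rfl _ rfl
        (.eq ⟨x.1.length - 1, hl1⟩ ⟨y.1.length - 1, hl2⟩) (by simpa [PFml.qr] using y.2.2.1)
      simp only [PFml.Sat, ← hg1, ← hg2] at this
      exact this h2
    rcases h1 with h | h
    · exact key x y h h2
    · exact (key y x h h2.symm).symm
  · intro x hx
    exact (hW.root _).2 ((hZ.root _).1 hx)
  · intro x y hx
    exact (hW.cover _ _).2 ((hZ.cover _ _).1 hx)

end Logic

section Transfer
variable {V : Vocab} {α β : Type} {A : Str V α} {B : Str V β} {k : ℕ}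

theorem open_ext {X : EObj V} (hX : IsCoalg k X) {f : X.carrier → (FE V k A).carrier}
    (hf : IsPWEmb k X (FE V k A) f) (ho : IsOpen k X (FE V k A) f) (S : Set X.carrier)
    (l : List α) (hS : (S = ∅ ∧ l = []) ∨ ∃ x, S = {y | X.le y x} ∧ l = (f x).1)
    (hl : l.length < k) (a : α) : ∃ x', (f x').1 = l ++ [a] ∧ ∀ y ∈ S, X.le y x' := by
  have hF := FE_LF (k := k) A
  have hSd : ∀ x y, X.le x y → y ∈ S → x ∈ S := by
    rcases hS with ⟨rfl, -⟩ | ⟨x, rfl, -⟩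
    · intro _ _ _ h; exact h
    · intro y z h1 h2; exact hX.2.1 _ _ _ h1 h2
  have hSp : IsPath (Sub X S) := by
    rcases hS with ⟨rfl, -⟩ | ⟨x, rfl, -⟩
    · exact ⟨Set.finite_empty, fun x => absurd x.2 (by simp)⟩
    · exact ⟨(hX.2.2.2.1 x).1, fun y z => (hX.2.2.2.1 x).2.2 _ _ y.2 z.2⟩
  have hSl : ∀ x ∈ S, (f x).1 <+: l := by
    rcases hS with ⟨rfl, -⟩ | ⟨x, rfl, rfl⟩
    · intro x hx; exact absurd hx (by simp)
    · intro y hy; exact hom_mono hX hF.coalg hf.1 hy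
  let top : (FE V k A).carrier := ⟨l ++ [a], by simp, by simpa using hl⟩
  let R : Set (FE V k A).carrier := {y | (FE V k A).le y top}
  have hR : ∀ x y, (FE V k A).le x y → y ∈ R → x ∈ R :=
    fun x y h1 h2 => hF.coalg.2.1 _ _ _ h1 h2
  have hRp : IsPath (Sub (FE V k A) R) := ⟨(hF.coalg.2.2.2.1 top).1,
    fun y z => (hF.coalg.2.2.2.1 top).2.2 _ _ y.2 z.2⟩
  have hi : ∀ x : (Sub X S).carrier, f x.1 ∈ R := fun x =>
    (hSl x.1 x.2).trans (List.prefix_append _ _)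
  have hP := sub_coalg hX S
  have hQ := sub_coalg (hF.coalg) R
  obtain ⟨d, hd1, hd2, hd3⟩ := ho (Sub X S) (Sub (FE V k A) R) hP hSp hQ hRp
    (fun x => ⟨f x.1, hi x⟩) Subtype.val Subtype.val
    (sub_factor hR (hf.2 _ hP hSp _ (sub_emb hSd)) hi) (sub_emb hSd) (sub_emb hR) (fun _ => rfl)
  let t : (Sub (FE V k A) R).carrier := ⟨top, hF.coalg.1 top⟩
  refine ⟨d t, congrArg Subtype.val (hd3 t), fun y hy => ?_⟩
  have := hom_mono hQ hX hd1 (x := ⟨f y, hi ⟨y, hy⟩⟩) (y := t) (hi ⟨y, hy⟩)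
  have e := hd2 ⟨y, hy⟩
  simp only at e
  rwa [e] at this

theorem prefix_succ {γ : Type} {l l' : List γ} (h : l <+: l') (hl : l'.length = l.length + 1) :
    ∃ c, l' = l ++ [c] := by
  obtain ⟨s, rfl⟩ := h
  have : s.length = 1 := by simpa using hl
  obtain ⟨c, rfl⟩ := List.length_eq_one_iff.1 this
  exact ⟨c, rfl⟩

theorem ofFn_snoc {γ : Type} {n : ℕ} (e : Fin n → γ) (a : γ) :
    List.ofFn (Fin.snoc e a : Fin (n+1) → γ) = List.ofFn e ++ [a] := by
  rw [List.ofFn_succ_last]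
  simp [Fin.snoc]

theorem len_eq {Z : EObj V} (hZ : IsCoalg k Z) {p : Z.carrier → (FE V k A).carrier}
    {q : Z.carrier → (FE V k B).carrier} (hp : IsHom Z (FE V k A) p) (hq : IsHom Z (FE V k B) q)
    (z : Z.carrier) : (p z).1.length = (q z).1.length :=
  rank_unique hZ (r := fun z => (p z).1.length) (s := fun z => (q z).1.length)
    (fun x h => ((FE_LF A).root _).1 (hp.2.2.1 x h))
    (fun x y h => (((FE_LF A).cover _ _).1 (hp.2.2.2 x y h)).2)
    (fun x h => ((FE_LF B).root _).1 (hq.2.2.1 x h))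
    (fun x y h => (((FE_LF B).cover _ _).1 (hq.2.2.2 x y h)).2) z

def St {Z : EObj V} (p : Z.carrier → (FE V k A).carrier) (q : Z.carrier → (FE V k B).carrier)
    (n : ℕ) (e : Fin n → α) (e' : Fin n → β) : Prop :=
  n = 0 ∨ ∃ z, (p z).1 = List.ofFn e ∧ (q z).1 = List.ofFn e'

theorem St.pts {Z : EObj V} (hZ : IsCoalg k Z) {p : Z.carrier → (FE V k A).carrier}
    {q : Z.carrier → (FE V k B).carrier} (hp : IsHom Z (FE V k A) p) (hq : IsHom Z (FE V k B) q)
    {n : ℕ} {e : Fin n → α} {e' : Fin n → β} {z : Z.carrier}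
    (h1 : (p z).1 = List.ofFn e) (h2 : (q z).1 = List.ofFn e') (i : Fin n) :
    ∃ y, Z.le y z ∧ (p y).1.getLast (p y).2.1 = e i ∧ (q y).1.getLast (q y).2.1 = e' i := by
  have hA := FE_LF (k := k) A
  have hB := FE_LF (k := k) B
  have hlen : ((p z).1.take (i.1+1)).length = i.1 + 1 := by
    rw [List.length_take, h1, List.length_ofFn]; have := i.2; omega
  obtain ⟨w, hw⟩ := hA.down (p z) ((p z).1.take (i.1+1)) (by
    intro e; rw [e] at hlen; simp at hlen) (List.take_prefix _ _)
  have hw : w.1 = _ := hw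
  obtain ⟨y, hy1, hy2⟩ := hom_down hZ hA.coalg hp z w (by
    change w.1 <+: (p z).1
    rw [hw]; exact List.take_prefix _ _)
  have hl1 : (p y).1.length = i.1 + 1 := by rw [hy2, hw, hlen]
  have hl2 : (q y).1.length = i.1 + 1 := by rw [← len_eq hZ hp hq, hl1]
  have g1 : (p y).1 <+: (p z).1 := hom_mono hZ hA.coalg hp hy1
  have g2 : (q y).1 <+: (q z).1 := hom_mono hZ hB.coalg hq hy1
  refine ⟨y, hy1, ?_, ?_⟩
  · obtain ⟨hl, hg⟩ := getLast_prefix g1 (p y).2.1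
    rw [hg]
    simp [h1, hl1]
  · obtain ⟨hl, hg⟩ := getLast_prefix g2 (q y).2.1
    rw [hg]
    simp [h2, hl2]

theorem transfer (har : ∀ r : V.Rel, V.ar r ≠ 0) {Z : EObj V} (hZ : IsCoalg k Z)
    {p : Z.carrier → (FE V k A).carrier} {q : Z.carrier → (FE V k B).carrier}
    (hp : IsPWEmb k Z (FE V k A) p) (hpo : IsOpen k Z (FE V k A) p)
    (hq : BijThenOpenE V k Z (FE V k B) q) :
    ∀ {n : ℕ} (φ : PFml V n) (e : Fin n → α) (e' : Fin n → β), n + φ.qr ≤ k →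
      St p q n e e' → φ.Sat A e → φ.Sat B e' := by
  have hA := FE_LF (k := k) A
  have hB := FE_LF (k := k) B
  obtain ⟨W, hW, u, v, hu, hub, hv, hvo, hquv⟩ := hq
  obtain rfl : q = fun z => v (u z) := funext hquv
  have hqh : IsHom Z (FE V k B) (fun z => v (u z)) := hom_comp hu hv.1
  have hcmp : ∀ x y z, Z.le x z → Z.le y z → (p x).1 <+: (p y).1 ∨ (p y).1 <+: (p x).1 := by
    intro x y z hx hy
    exact ((hZ.2.2.2.1 z).2.2 x y hx hy).imp (fun h => hom_mono hZ hA.coalg hp.1 h)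
      (fun h => hom_mono hZ hA.coalg hp.1 h)
  have hemb : ∀ z, IsEmb (Sub Z {y | Z.le y z}) (FE V k A) (fun y => p y.1) := fun z =>
    hp.2 _ (sub_coalg hZ _) ⟨(hZ.2.2.2.1 z).1, fun y w => (hZ.2.2.2.1 z).2.2 _ _ y.2 w.2⟩ _
      (sub_emb fun x y h1 h2 => hZ.2.1 _ _ _ h1 h2)
  intro n φ
  induction φ with
  | @rel n r w =>
    intro e e' _ hS hs
    rcases hS with rfl | ⟨z, h1, h2⟩
    · exact (w ⟨0, Nat.pos_of_ne_zero (har r)⟩).elim0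
    choose y hy1 hy2 hy3 using St.pts hZ hp.1 hqh h1 h2
    have := (hemb z).2.2.1 r (fun i => ⟨y (w i), hy1 (w i)⟩)
      ⟨fun i j => hcmp _ _ z (hy1 _) (hy1 _), by simp only [hy2]; exact hs⟩
    have := (hqh.1 r _ this).2
    simp only [hy3] at this
    exact this
  | @eq n i j =>
    intro e e' _ hS hs
    rcases hS with rfl | ⟨z, h1, h2⟩
    · exact i.elim0
    choose y hy1 hy2 hy3 using St.pts hZ hp.1 hqh h1 h2
    have := (hemb z).2.2.2 ⟨y i, hy1 i⟩ ⟨y j, hy1 j⟩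
      ⟨hcmp _ _ z (hy1 _) (hy1 _), by simp only [hy2]; exact hs⟩
    have := (hqh.2.1 _ _ this).2
    simp only [hy3] at this
    exact this
  | and φ ψ ih1 ih2 =>
    intro e e' hk hS hs
    simp only [PFml.qr] at hk
    exact ⟨ih1 e e' (by omega) hS hs.1, ih2 e e' (by omega) hS hs.2⟩
  | or φ ψ ih1 ih2 =>
    intro e e' hk hS hs
    simp only [PFml.qr] at hk
    exact hs.imp (ih1 e e' (by omega) hS) (ih2 e e' (by omega) hS)
  | @ex n φ ih =>
    intro e e' hk hS ⟨a, hs⟩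
    simp only [PFml.qr] at hk
    suffices h : ∃ b, St p (fun z => v (u z)) (n+1) (Fin.snoc e a : Fin (n+1) → α)
        (Fin.snoc e' b : Fin (n+1) → β) by
      obtain ⟨b, hb⟩ := h
      exact ⟨b, ih _ _ (by omega) hb hs⟩
    obtain ⟨z', h1, h2⟩ : ∃ z', (p z').1 = List.ofFn e ++ [a] ∧
        List.ofFn e' <+: (v (u z')).1 := by
      rcases hS with rfl | ⟨z, h1, h2⟩
      · obtain ⟨z', h1, -⟩ := open_ext hZ hp hpo ∅ (List.ofFn e) (Or.inl ⟨rfl, by simp⟩)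
          (by simp; omega) a
        exact ⟨z', h1, by simp⟩
      · obtain ⟨z', h3, h4⟩ := open_ext hZ hp hpo {y | Z.le y z} (List.ofFn e)
          (Or.inr ⟨z, rfl, h1.symm⟩) (by simp; omega) a
        refine ⟨z', h3, ?_⟩
        rw [← h2]
        exact hom_mono hZ hB.coalg hqh (h4 z (hZ.1 z))
    have hl := len_eq hZ hp.1 hqh z'
    obtain ⟨b, hb⟩ := prefix_succ h2 (by rw [← hl, h1]; simp)
    exact ⟨b, Or.inr ⟨z', by rw [ofFn_snoc, h1], by rw [ofFn_snoc, hb]⟩⟩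
  | @all n φ ih =>
    intro e e' hk hS hs b
    simp only [PFml.qr] at hk
    suffices h : ∃ a, St p (fun z => v (u z)) (n+1) (Fin.snoc e a : Fin (n+1) → α)
        (Fin.snoc e' b : Fin (n+1) → β) by
      obtain ⟨a, ha⟩ := h
      exact ih _ _ (by omega) ha (hs a)
    obtain ⟨z', h1, h2⟩ : ∃ z', (v (u z')).1 = List.ofFn e' ++ [b] ∧
        List.ofFn e <+: (p z').1 := by
      rcases hS with rfl | ⟨z, h1, h2⟩
      · obtain ⟨w', h1, -⟩ := open_ext hW hv hvo ∅ (List.ofFn e') (Or.inl ⟨rfl, by simp⟩)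
          (by simp; omega) b
        obtain ⟨z', rfl⟩ := hub.2 w'
        exact ⟨z', h1, by simp⟩
      · obtain ⟨w', h3, h4⟩ := open_ext hW hv hvo {y | W.le y (u z)} (List.ofFn e')
          (Or.inr ⟨u z, rfl, h2.symm⟩) (by simp; omega) b
        obtain ⟨z', rfl⟩ := hub.2 w'
        refine ⟨z', h3, ?_⟩
        rw [← h1]
        obtain ⟨z'', h5, h6⟩ := hom_down hZ hW hu z' (u z) (h4 _ (hW.1 _))
        rw [← hub.1 h6]
        exact hom_mono hZ hA.coalg hp.1 h5
    have hl := len_eq hZ hp.1 hqh z'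
    obtain ⟨a, ha⟩ := prefix_succ h2 (by rw [hl, h1]; simp)
    exact ⟨a, Or.inr ⟨z', by rw [ofFn_snoc, ha], by rw [ofFn_snoc, h1]⟩⟩

end Transfer

end PFSpan

/-- `A` and `B` satisfy the same sentences of `⁺FO_k` if, and only if,
there are objects `Z, Z′` of `EM(E_k^I)` and morphisms `p : Z → F_k^I(A)`,
`q : Z → F_k^I(B)`, `p′ : Z′ → F_k^I(B)`, `q′ : Z′ → F_k^I(A)` such that `p, p′` are
open pathwise embeddings and `q, q′` are compositions of a bijection followed by an
open pathwise embedding. -/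
theorem positive_FO_equivalence_iff_spans
    (V : Vocab) [Finite V.Rel] (har : ∀ r : V.Rel, V.ar r ≠ 0)
    {α β : Type} [Nonempty α] [Nonempty β] (A : Str V α) (B : Str V β) (k : ℕ) :
    (∀ φ : PFml V 0, φ.qr ≤ k →
        (φ.Sat A (fun i => i.elim0) ↔ φ.Sat B (fun i => i.elim0))) ↔
      ∃ Z Z' : EObj V, EObj.IsCoalg k Z ∧ EObj.IsCoalg k Z' ∧
        ∃ (p : Z.carrier → (FE V k A).carrier) (q : Z.carrier → (FE V k B).carrier)
          (p' : Z'.carrier → (FE V k B).carrier) (q' : Z'.carrier → (FE V k A).carrier),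
          EObj.IsPWEmb k Z (FE V k A) p ∧ EObj.IsOpen k Z (FE V k A) p ∧
          BijThenOpenE V k Z (FE V k B) q ∧
          EObj.IsPWEmb k Z' (FE V k B) p' ∧ EObj.IsOpen k Z' (FE V k B) p' ∧
          BijThenOpenE V k Z' (FE V k A) q' := by
  constructor
  · intro h
    obtain ⟨Z, hZ, p, q, h1, h2, h3⟩ := PFSpan.make_span (A := A) (B := B) har
      (fun φ hφ => (h φ hφ).1)
    obtain ⟨Z', hZ', p', q', h1', h2', h3'⟩ := PFSpan.make_span (A := B) (B := A) har
      (fun φ hφ => (h φ hφ).2)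
    exact ⟨Z, Z', hZ, hZ', p, q, p', q', h1, h2, h3, h1', h2', h3'⟩
  · rintro ⟨Z, Z', hZ, hZ', p, q, p', q', h1, h2, h3, h1', h2', h3'⟩ φ hφ
    exact ⟨PFSpan.transfer har hZ h1 h2 h3 φ _ _ (by omega) (Or.inl rfl),
      PFSpan.transfer har hZ' h1' h2' h3' φ _ _ (by omega) (Or.inl rfl)⟩
end

section
/- For all σ-structures A and B and every positive integer k, the following are equivalent: (i) every sentence of ⁺L^k that is true in A is true in B; (ii) Duplicator has a winning strategy in the positive k-pebble game from A to B. -/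
/-- Positive formulas of the `k`-variable fragment `L^k` of the infinitary logic
`L_{∞,ω}(σ)`: formulas using only the variables `x_1, …, x_k`, with set-sized
conjunctions and disjunctions, both quantifiers, and no negation symbol. -/
inductive PLFml (V : Vocab) (k : ℕ) : Type 1
  | rel (r : V.Rel) (v : Fin (V.ar r) → Fin k) : PLFml V k
  | eq (i j : Fin k) : PLFml V k
  | iand (ι : Type) (f : ι → PLFml V k) : PLFml V k
  | ior (ι : Type) (f : ι → PLFml V k) : PLFml V k
  | ex (i : Fin k) (φ : PLFml V k) : PLFml V k
  | all (i : Fin k) (φ : PLFml V k) : PLFml V k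

namespace PLFml

/-- Free variables. -/
def freeVars {V : Vocab} {k : ℕ} : PLFml V k → Set (Fin k)
  | .rel _ v => Set.range v
  | .eq i j => {i, j}
  | .iand _ f => ⋃ x, freeVars (f x)
  | .ior _ f => ⋃ x, freeVars (f x)
  | .ex i φ => freeVars φ \ {i}
  | .all i φ => freeVars φ \ {i}

/-- Satisfaction, relative to a partial environment. -/
def Sat {V : Vocab} {k : ℕ} {α : Type} (M : Str V α) :
    PLFml V k → (Fin k → Option α) → Prop
  | .rel r v, e => ∃ g : Fin (V.ar r) → α, (∀ i, e (v i) = some (g i)) ∧ M.rel r g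
  | .eq i j, e => ∃ x : α, e i = some x ∧ e j = some x
  | .iand _ f, e => ∀ x, Sat M (f x) e
  | .ior _ f, e => ∃ x, Sat M (f x) e
  | .ex i φ, e => ∃ a : α, Sat M φ (Function.update e i (some a))
  | .all i φ, e => ∀ a : α, Sat M φ (Function.update e i (some a))

end PLFml
/-- The relation determined by the current placings `ρ` of the `k` pairs of pebbles is a
partial homomorphism from `A` to `B`: it is functional and preserves the
interpretations of all relation symbols. -/
def PebblesHom {V : Vocab} {α β : Type} (A : Str V α) (B : Str V β) {k : ℕ}
    (ρ : Fin k → Option (α × β)) : Prop :=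
  (∀ (p q : Fin k) (x x' : α) (y y' : β),
    ρ p = some (x, y) → ρ q = some (x', y') → x = x' → y = y') ∧
  (∀ (r : V.Rel) (v : Fin (V.ar r) → Fin k) (g : Fin (V.ar r) → α × β),
    (∀ t, ρ (v t) = some (g t)) →
      A.rel r (fun t => (g t).1) → B.rel r fun t => (g t).2)

/-- Duplicator has a winning strategy in the positive `k`-pebble game from `A` to `B`:
in each round Spoiler places (or relocates) a pebble on an element of either structure
and Duplicator places the corresponding pebble on an element of the other structure;
Duplicator wins a round if the current pebble placings form a partial homomorphism from
`A` to `B`, and wins the game if they can keep winning after `n` rounds for every `n`.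
This is rendered by the existence of a winning invariant. -/
def PPebWin (V : Vocab) {α β : Type} (A : Str V α) (B : Str V β) (k : ℕ) : Prop :=
  ∃ S : (Fin k → Option (α × β)) → Prop,
    S (fun _ => none) ∧
    ∀ ρ, S ρ → PebblesHom A B ρ ∧
      (∀ (p : Fin k) (a : α), ∃ b : β, S (Function.update ρ p (some (a, b)))) ∧
      (∀ (p : Fin k) (b : β), ∃ a : α, S (Function.update ρ p (some (a, b))))

theorem env_update {k : ℕ} {γ δ : Type} (f : γ → δ) (ρ : Fin k → Option γ) (p : Fin k) (c : γ) :
    (fun i => (Function.update ρ p (some c) i).map f) =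
      Function.update (fun i => (ρ i).map f) p (some (f c)) := by
  funext i
  by_cases h : i = p
  · subst h; simp
  · simp [h]

theorem dom_update {k : ℕ} {γ : Type} (ρ : Fin k → Option γ) (p : Fin k) (c : γ)
    (s : Set (Fin k)) (h : ∀ i ∈ s, (Function.update ρ p (some c) i).isSome) :
    ∀ i ∈ s \ {p}, (ρ i).isSome := by
  rintro i ⟨hi, hp⟩
  have := h i hi
  rwa [Function.update_of_ne hp] at this

theorem win_sat {V : Vocab} {α β : Type} {A : Str V α} {B : Str V β} {k : ℕ}
    {S : (Fin k → Option (α × β)) → Prop}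
    (hS : ∀ ρ, S ρ → PebblesHom A B ρ ∧
      (∀ (p : Fin k) (a : α), ∃ b : β, S (Function.update ρ p (some (a, b)))) ∧
      (∀ (p : Fin k) (b : β), ∃ a : α, S (Function.update ρ p (some (a, b)))))
    (φ : PLFml V k) : ∀ ρ, S ρ → φ.Sat A (fun i => (ρ i).map Prod.fst) →
      φ.Sat B (fun i => (ρ i).map Prod.snd) := by
  induction φ with
  | rel r v =>
    rintro ρ h ⟨g, hg, hr⟩
    have h1 : ∀ t, ∃ b, ρ (v t) = some (g t, b) := by
      intro t
      obtain ⟨⟨a, b⟩, h1, h2⟩ := Option.map_eq_some_iff.1 (hg t)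
      exact ⟨b, by rw [h1, ← h2]⟩
    choose b hb using h1
    refine ⟨b, fun t => by simp [hb t], ?_⟩
    exact (hS ρ h).1.2 r v (fun t => (g t, b t)) hb hr
  | eq i j =>
    rintro ρ h ⟨x, hi, hj⟩
    obtain ⟨⟨a, b⟩, h1, rfl⟩ := Option.map_eq_some_iff.1 hi
    obtain ⟨⟨a', b'⟩, h2, h3⟩ := Option.map_eq_some_iff.1 hj
    have := (hS ρ h).1.1 i j a a' b b' h1 h2 h3.symm
    subst this
    exact ⟨b, by simp [h1], by simp [h2]⟩
  | iand ι f ih => exact fun ρ h hs x => ih x ρ h (hs x)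
  | ior ι f ih => exact fun ρ h ⟨x, hs⟩ => ⟨x, ih x ρ h hs⟩
  | ex p φ ih =>
    rintro ρ h ⟨a, ha⟩
    obtain ⟨b, hb⟩ := (hS ρ h).2.1 p a
    have := ih _ hb
    rw [env_update, env_update] at this
    exact ⟨b, this ha⟩
  | all p φ ih =>
    intro ρ h ha b
    obtain ⟨a, hb⟩ := (hS ρ h).2.2 p b
    have := ih _ hb
    rw [env_update, env_update] at this
    exact this (ha a)

/-- every sentence of `⁺L^k` true in `A` is true in `B` if, and only if,
Duplicator has a winning strategy in the positive `k`-pebble game from `A` to `B`.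
(As is standard in first-order model theory, structures are assumed non-empty.) -/
theorem positive_pebble_game_characterisation
    (V : Vocab) [Finite V.Rel] (har : ∀ r : V.Rel, V.ar r ≠ 0)
    {α β : Type} [Nonempty α] [Nonempty β] (A : Str V α) (B : Str V β)
    (k : ℕ) (hk : 0 < k) :
    (∀ φ : PLFml V k, φ.freeVars = ∅ →
        φ.Sat A (fun _ => none) → φ.Sat B (fun _ => none)) ↔
      PPebWin V A B k := by
  constructor
  · intro H
    refine ⟨fun ρ => ∀ φ : PLFml V k, (∀ i ∈ φ.freeVars, (ρ i).isSome) →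
      φ.Sat A (fun i => (ρ i).map Prod.fst) → φ.Sat B (fun i => (ρ i).map Prod.snd), ?_, ?_⟩
    · intro φ hφ
      exact H φ (Set.eq_empty_iff_forall_notMem.2 fun i hi => by simpa using hφ i hi)
    · intro ρ hρ
      refine ⟨⟨?_, ?_⟩, ?_, ?_⟩
      · rintro p q x x' y y' hp hq rfl
        obtain ⟨z, h1, h2⟩ := hρ (.eq p q)
          (by
            intro i hi
            rcases hi with rfl | hi
            · simp [hp]
            · cases hi; simp [hq])
          ⟨x, by simp [hp], by simp [hq]⟩
        simp [hp] at h1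
        simp [hq] at h2
        rw [h1, h2]
      · intro r v g hg hr
        obtain ⟨g', h1, h2⟩ := hρ (.rel r v)
          (by rintro i ⟨t, rfl⟩; simp [hg])
          ⟨fun t => (g t).1, fun t => by simp [hg], hr⟩
        have : g' = fun t => (g t).2 := by
          funext t
          have := h1 t
          simp [hg] at this
          exact this.symm
        rwa [← this]
      · intro p a
        by_contra! hc
        choose f hf hA hB using hc
        obtain ⟨b, hb⟩ := hρ (.ex p (.iand β f))
          (by
            rintro i ⟨hi, hp⟩
            obtain ⟨b, hb⟩ := Set.mem_iUnion.1 hi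
            exact dom_update ρ p (a, b) _ (hf b) i ⟨hb, hp⟩)
          ⟨a, fun b => by have := hA b; rwa [env_update] at this⟩
        apply hB b
        rw [env_update]
        exact hb b
      · intro p b
        by_contra! hc
        choose f hf hA hB using hc
        obtain ⟨a, ha⟩ := hρ (.all p (.ior α f))
          (by
            rintro i ⟨hi, hp⟩
            obtain ⟨a, ha⟩ := Set.mem_iUnion.1 hi
            exact dom_update ρ p (a, b) _ (hf a) i ⟨ha, hp⟩)
          (fun a => ⟨a, by have := hA a; rwa [env_update] at this⟩) b
        apply hB a
        rw [env_update]
        exact ha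
  · rintro ⟨S, h0, hS⟩ φ - h
    exact win_sat hS φ _ h0 h
end

section
/- For all σ-structures A and B and every positive integer k, there exists a positive bisimulation from F_k^I(A) to F_k^I(B) in EM(P_k^I) if, and only if, Duplicator has a winning strategy in the positive k-pebble game from A to B. -/
/-- An object datum for the Eilenberg–Moore category `EM(P_k^I)` of the pebbling comonad
over `σ^I = σ ∪ {I}`: a `σ`-structure with an interpretation `ieq` of the fresh binary
relation symbol `I`, a (forest) order and a pebbling function. -/
structure PObj (V : Vocab) (k : ℕ) : Type 1 where
  carrier : Type
  rel : ∀ r : V.Rel, (Fin (V.ar r) → carrier) → Prop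
  ieq : carrier → carrier → Prop
  le : carrier → carrier → Prop
  peb : carrier → Fin k

namespace PObj

variable {V : Vocab} {k : ℕ}

/-- Gaifman adjacency, with respect to all relations of `σ ∪ {I}`. -/
def Adj (X : PObj V k) (x y : X.carrier) : Prop :=
  x ≠ y ∧ ((∃ r v, X.rel r v ∧ (∃ i, v i = x) ∧ (∃ j, v j = y)) ∨ X.ieq x y ∨ X.ieq y x)

/-- The covering relation of the order of `X`. -/
def Cover (X : PObj V k) (x y : X.carrier) : Prop :=
  X.le x y ∧ x ≠ y ∧ ∀ z, X.le x z → X.le z y → z = x ∨ z = y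

/-- Roots, i.e. minimal elements of the forest order. -/
def IsRoot (X : PObj V k) (x : X.carrier) : Prop := ∀ y, X.le y x → y = x

/-- `X` is (the datum of) a coalgebra for `P_k^I`: a `k`-pebble forest-ordered
`σ^I`-structure. -/
def IsCoalg (X : PObj V k) : Prop :=
  (∀ x, X.le x x) ∧ (∀ x y z, X.le x y → X.le y z → X.le x z) ∧
  (∀ x y, X.le x y → X.le y x → x = y) ∧
  (∀ x : X.carrier, {y | X.le y x}.Finite ∧
    ∀ y z, X.le y x → X.le z x → X.le y z ∨ X.le z y) ∧
  (∀ x y, X.Adj x y → X.le x y ∨ X.le y x) ∧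
  (∀ x y, X.Adj x y → X.le x y → x ≠ y →
    ∀ z, X.le x z → x ≠ z → X.le z y → X.peb x ≠ X.peb z)

/-- Morphisms of `EM(P_k^I)`: homomorphisms of `σ^I`-structures that are forest
morphisms and preserve the pebbling functions. -/
def IsHom (X Y : PObj V k) (f : X.carrier → Y.carrier) : Prop :=
  (∀ r v, X.rel r v → Y.rel r fun i => f (v i)) ∧
  (∀ x y, X.ieq x y → Y.ieq (f x) (f y)) ∧
  (∀ x, X.IsRoot x → Y.IsRoot (f x)) ∧
  (∀ x y, X.Cover x y → Y.Cover (f x) (f y)) ∧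
  (∀ x, Y.peb (f x) = X.peb x)

/-- Embeddings: morphisms that are injective and reflect all relations. -/
def IsEmb (X Y : PObj V k) (f : X.carrier → Y.carrier) : Prop :=
  IsHom X Y f ∧ Function.Injective f ∧
  (∀ r v, (Y.rel r fun i => f (v i)) → X.rel r v) ∧
  (∀ x y, Y.ieq (f x) (f y) → X.ieq x y)

/-- Paths: objects whose forest order is finite and linear. -/
def IsPath (X : PObj V k) : Prop :=
  Finite X.carrier ∧ ∀ x y : X.carrier, X.le x y ∨ X.le y x

/-- Pathwise embeddings. -/
def IsPWEmb (X Y : PObj V k) (f : X.carrier → Y.carrier) : Prop :=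
  IsHom X Y f ∧ ∀ P : PObj V k, IsCoalg P → IsPath P →
    ∀ m : P.carrier → X.carrier, IsEmb P X m → IsEmb P Y fun p => f (m p)

/-- Open morphisms: every commutative square of path embeddings over `f` admits a
diagonal filler. -/
def IsOpen (X Y : PObj V k) (f : X.carrier → Y.carrier) : Prop :=
  ∀ P Q : PObj V k, IsCoalg P → IsPath P → IsCoalg Q → IsPath Q →
    ∀ (i : P.carrier → Q.carrier) (m : P.carrier → X.carrier)
      (n : Q.carrier → Y.carrier),
      IsEmb P Q i → IsEmb P X m → IsEmb Q Y n → (∀ x, n (i x) = f (m x)) →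
      ∃ d : Q.carrier → X.carrier, IsHom Q X d ∧ (∀ x, d (i x) = m x) ∧ ∀ q, f (d q) = n q

end PObj
/-- The co-free coalgebra `F_k^I(A)` for the pebbling comonad on `J(A)`: finite
non-empty sequences of moves `(p_i, a_i)`, ordered by the prefix order.  A tuple of
sequences is related iff the sequences are pairwise comparable, the pebble index of the
last move of a prefix does not reappear in the corresponding suffix, and the elements of
the last moves are related in `J(A)`; the fresh relation `I` is interpreted accordingly,
with equality of the elements of the last moves. -/
def FP (V : Vocab) (k : ℕ) {α : Type} (A : Str V α) : PObj V k where
  carrier := {l : List (Fin k × α) // l ≠ []}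
  rel r v :=
    (∀ i j, (v i).1 <+: (v j).1 ∨ (v j).1 <+: (v i).1) ∧
    (∀ i j w, (v j).1 = (v i).1 ++ w →
      ∀ m ∈ w, m.1 ≠ ((v i).1.getLast (v i).2).1) ∧
    A.rel r fun i => ((v i).1.getLast (v i).2).2
  ieq s t :=
    ((s.1 <+: t.1) ∨ (t.1 <+: s.1)) ∧
    (∀ w, t.1 = s.1 ++ w → ∀ m ∈ w, m.1 ≠ (s.1.getLast s.2).1) ∧
    (∀ w, s.1 = t.1 ++ w → ∀ m ∈ w, m.1 ≠ (t.1.getLast t.2).1) ∧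
    (s.1.getLast s.2).2 = (t.1.getLast t.2).2
  le s t := s.1 <+: t.1
  peb s := (s.1.getLast s.2).1
/-- A positive bisimulation from `X` to `Y` in `EM(P_k^I)`: a diagram
`X ⟵p Z₁ ⟶h Z₂ ⟶q Y` in which `p` and `q` are open pathwise embeddings and `h` is a
bijective morphism. -/
def PosBisimP (V : Vocab) (k : ℕ) (X Y : PObj V k) : Prop :=
  ∃ Z₁ Z₂ : PObj V k, PObj.IsCoalg Z₁ ∧ PObj.IsCoalg Z₂ ∧
    ∃ (p : Z₁.carrier → X.carrier) (h : Z₁.carrier → Z₂.carrier)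
      (q : Z₂.carrier → Y.carrier),
      PObj.IsPWEmb Z₁ X p ∧ PObj.IsOpen Z₁ X p ∧
      PObj.IsHom Z₁ Z₂ h ∧ Function.Bijective h ∧
      PObj.IsPWEmb Z₂ Y q ∧ PObj.IsOpen Z₂ Y q

namespace Bis

open PObj

variable {V : Vocab} {k : ℕ}

lemma exists_cover {X : PObj V k} (hX : X.IsCoalg) {x y : X.carrier} (h : X.le x y)
    (hne : x ≠ y) : ∃ z, X.le x z ∧ X.Cover z y := by
  obtain ⟨hr, ht, ha, hf, -, -⟩ := hX
  have hfin : {z | X.le x z ∧ X.le z y ∧ z ≠ y}.Finite :=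
    (hf y).1.subset fun z hz => hz.2.1
  obtain ⟨z, ⟨hz1, hz2, hz3⟩, hz⟩ := Set.exists_max_image _
    (fun z => {w | X.le w z}.ncard) hfin ⟨x, hr x, h, hne⟩
  refine ⟨z, hz1, hz2, hz3, fun u hu1 hu2 => ?_⟩
  by_cases huy : u = y
  · exact Or.inr huy
  · left
    have h1 := hz u ⟨ht _ _ _ hz1 hu1, hu2, huy⟩
    have h2 : {w | X.le w z} = {w | X.le w u} :=
      Set.eq_of_subset_of_ncard_le (fun w hw => ht _ _ _ hw hu1) h1 (hf u).1
    have h3 : u ∈ {w | X.le w z} := by rw [h2]; exact hr u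
    exact ha _ _ h3 hu1

lemma coalg_ind {X : PObj V k} (hX : X.IsCoalg) {C : X.carrier → Prop}
    (H : ∀ y, (∀ z, X.Cover z y → C z) → C y) (y : X.carrier) : C y := by
  obtain ⟨hr, ht, ha, hf, -, -⟩ := hX
  induction hn : {w | X.le w y}.ncard using Nat.strong_induction_on generalizing y with
  | _ n ih =>
    subst hn
    refine H y fun z hz => ih _ ?_ z rfl
    refine Set.ncard_lt_ncard ⟨fun w hw => ht _ _ _ hw hz.1, fun hh => ?_⟩ (hf y).1
    exact hz.2.1 (ha _ _ hz.1 (hh (hr y)))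

lemma hom_mono {X Y : PObj V k} (hX : X.IsCoalg) (hY : Y.IsCoalg)
    {f : X.carrier → Y.carrier} (hf : IsHom X Y f) {x y : X.carrier} (h : X.le x y) :
    Y.le (f x) (f y) := by
  induction y using coalg_ind hX with
  | H y ih =>
    by_cases hne : x = y
    · subst hne; exact hY.1 _
    · obtain ⟨z, hz1, hz2⟩ := exists_cover hX h hne
      exact hY.2.1 _ _ _ (ih z hz2 hz1) (hf.2.2.2.1 _ _ hz2).1

lemma hom_down {X Y : PObj V k} (hX : X.IsCoalg) (hY : Y.IsCoalg)
    {f : X.carrier → Y.carrier} (hf : IsHom X Y f) {s : Y.carrier} {y : X.carrier}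
    (h : Y.le s (f y)) : ∃ x, X.le x y ∧ f x = s := by
  induction y using coalg_ind hX with
  | H y ih =>
    by_cases hne : s = f y
    · exact ⟨y, hX.1 _, hne.symm⟩
    · by_cases hroot : X.IsRoot y
      · exact absurd (hf.2.2.1 _ hroot _ h) hne
      · simp only [IsRoot, not_forall] at hroot
        obtain ⟨u, hu1, hu2⟩ := hroot
        obtain ⟨z, -, hz⟩ := exists_cover hX hu1 hu2
        have hc := hf.2.2.2.1 _ _ hz
        rcases (hY.2.2.2.1 (f y)).2 _ _ h hc.1 with h1 | h1
        · obtain ⟨x, hx1, hx2⟩ := ih z hz h1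
          exact ⟨x, hX.2.1 _ _ _ hx1 hz.1, hx2⟩
        · rcases hc.2.2 _ h1 h with h2 | h2
          · exact ⟨z, hz.1, h2.symm⟩
          · exact absurd h2 hne

lemma exists_top {X : PObj V k} (hX : X.IsCoalg) {D : Set X.carrier} (hfin : D.Finite)
    (hne : D.Nonempty) (hch : ∀ x ∈ D, ∀ y ∈ D, X.le x y ∨ X.le y x) :
    ∃ w ∈ D, ∀ x ∈ D, X.le x w := by
  obtain ⟨hr, ht, ha, hf, -, -⟩ := hX
  obtain ⟨w, hw, hmax⟩ := Set.exists_max_image _ (fun z => {w | X.le w z}.ncard) hfin hne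
  refine ⟨w, hw, fun x hx => ?_⟩
  rcases hch x hx w hw with h | h
  · exact h
  · have h2 : {u | X.le u w} = {u | X.le u x} :=
      Set.eq_of_subset_of_ncard_le (fun u hu => ht _ _ _ hu h) (hmax x hx) (hf x).1
    have h3 : x ∈ {u | X.le u w} := by rw [h2]; exact hr x
    exact h3

/-- Restriction of an object to a subset. -/
def restr (X : PObj V k) (D : Set X.carrier) : PObj V k where
  carrier := D
  rel r v := X.rel r fun i => (v i).1
  ieq x y := X.ieq x.1 y.1
  le x y := X.le x.1 y.1
  peb x := X.peb x.1

lemma restr_coalg {X : PObj V k} (hX : X.IsCoalg) (D : Set X.carrier) :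
    (restr X D).IsCoalg := by
  obtain ⟨hr, ht, ha, hf, had, hp⟩ := hX
  have key : ∀ x y : D, (restr X D).Adj x y → X.Adj x.1 y.1 := by
    rintro x y ⟨hne, h⟩
    refine ⟨fun h => hne (Subtype.ext h), ?_⟩
    rcases h with ⟨r, v, hv, ⟨i, hi⟩, ⟨j, hj⟩⟩ | h
    · exact Or.inl ⟨r, _, hv, ⟨i, by rw [hi]⟩, ⟨j, by rw [hj]⟩⟩
    · exact Or.inr h
  refine ⟨fun x => hr _, fun x y z => ht _ _ _, fun x y h1 h2 => Subtype.ext (ha _ _ h1 h2),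
    fun x => ⟨?_, fun y z => (hf x.1).2 _ _⟩, fun x y h => had _ _ (key x y h), ?_⟩
  · exact Set.Finite.preimage (f := Subtype.val) Subtype.val_injective.injOn (hf x.1).1
  · intro x y h hle hne z h1 h2 h3
    exact hp _ _ (key x y h) hle (fun h => hne (Subtype.ext h)) _ h1
      (fun h => h2 (Subtype.ext h)) h3

lemma restr_val {X : PObj V k} {D : Set X.carrier}
    (hD : ∀ x ∈ D, ∀ y, X.le y x → y ∈ D) : IsEmb (restr X D) X Subtype.val := by
  refine ⟨⟨fun r v h => h, fun x y h => h, fun x h y hy => ?_, fun x y h => ?_, fun x => rfl⟩,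
    Subtype.val_injective, fun r v h => h, fun x y h => h⟩
  · exact congrArg Subtype.val (h ⟨y, hD _ x.2 _ hy⟩ hy)
  · refine ⟨h.1, fun hh => h.2.1 (Subtype.ext hh), fun z h1 h2 => ?_⟩
    rcases h.2.2 ⟨z, hD _ y.2 _ h2⟩ h1 h2 with h | h
    · exact Or.inl (congrArg Subtype.val h)
    · exact Or.inr (congrArg Subtype.val h)

lemma restr_lift {X Y : PObj V k} {D : Set X.carrier} {f : Y.carrier → X.carrier}
    (hf : IsEmb Y X f) (hD : ∀ y, f y ∈ D) : IsEmb Y (restr X D) fun y => ⟨f y, hD y⟩ := by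
  obtain ⟨⟨h1, h2, h3, h4, h5⟩, h6, h7, h8⟩ := hf
  refine ⟨⟨h1, h2, fun x h y hy => Subtype.ext (h3 x h y.1 hy), fun x y h => ?_, h5⟩,
    fun x y h => h6 (congrArg Subtype.val h), h7, h8⟩
  obtain ⟨g1, g2, g3⟩ := h4 x y h
  refine ⟨g1, fun h => g2 (congrArg Subtype.val h), fun z z1 z2 => ?_⟩
  rcases g3 z.1 z1 z2 with h | h
  · exact Or.inl (Subtype.ext h)
  · exact Or.inr (Subtype.ext h)

/-- `X` is order-isomorphic to a prefix-closed set of nonempty lists. -/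
structure ListLike (X : PObj V k) {M : Type} (e : X.carrier → List M) : Prop where
  inj : Function.Injective e
  le : ∀ x y, X.le x y ↔ e x <+: e y
  ne : ∀ x, e x ≠ []
  cl : ∀ x l, l ≠ [] → l <+: e x → ∃ y, e y = l

lemma ListLike.root {X : PObj V k} {M : Type} {e : X.carrier → List M} (h : ListLike X e)
    (x : X.carrier) : X.IsRoot x ↔ (e x).length = 1 := by
  have hx := List.length_pos_iff.2 (h.ne x)
  constructor
  · intro hr
    obtain ⟨y, hy⟩ := h.cl x ((e x).take 1) (by simp [h.ne x]) (List.take_prefix _ _)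
    have := hr y ((h.le _ _).2 (hy ▸ List.take_prefix _ _))
    subst this
    have := congrArg List.length hy
    simp at this
    omega
  · intro h1 y hy
    have h2 := (h.le _ _).1 hy
    have := List.length_pos_iff.2 (h.ne y)
    exact h.inj (h2.eq_of_length (by have := h2.length_le; omega))

lemma ListLike.cover {X : PObj V k} {M : Type} {e : X.carrier → List M} (h : ListLike X e)
    (x y : X.carrier) :
    X.Cover x y ↔ e x <+: e y ∧ (e y).length = (e x).length + 1 := by
  constructor
  · rintro ⟨h1, h2, h3⟩
    have h1 := (h.le _ _).1 h1
    refine ⟨h1, ?_⟩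
    have hlen : (e x).length < (e y).length := by
      rcases h1.length_le.lt_or_eq with h4 | h4
      · exact h4
      · exact absurd (h.inj (h1.eq_of_length h4)) h2
    obtain ⟨z, hz⟩ := h.cl y ((e y).take ((e x).length + 1))
      (by simp [h.ne y]) (List.take_prefix _ _)
    have hzl := congrArg List.length hz
    simp at hzl
    have hxz : e x <+: e z := by
      rw [hz, List.prefix_take_iff]; exact ⟨h1, by omega⟩
    rcases h3 z ((h.le _ _).2 hxz) ((h.le _ _).2 (hz ▸ List.take_prefix _ _)) with h5 | h5
    · subst h5; omega
    · subst h5; omega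
  · rintro ⟨h1, h2⟩
    refine ⟨(h.le _ _).2 h1, fun hh => by subst hh; omega, fun z hz1 hz2 => ?_⟩
    have hz1 := (h.le _ _).1 hz1
    have hz2 := (h.le _ _).1 hz2
    have := hz1.length_le
    have := hz2.length_le
    by_cases hl : (e x).length = (e z).length
    · exact Or.inl (h.inj (hz1.eq_of_length hl).symm)
    · exact Or.inr (h.inj (hz2.eq_of_length (by omega)))

lemma FP_listLike {α : Type} (A : Str V α) :
    ListLike (FP V k A) (M := Fin k × α) (fun x => x.1) where
  inj := Subtype.val_injective
  le _ _ := Iff.rfl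
  ne x := x.2
  cl _ l h _ := ⟨⟨l, h⟩, rfl⟩

lemma FP_adj {α : Type} (A : Str V α) {x y : (FP V k A).carrier} (h : (FP V k A).Adj x y) :
    (x.1 <+: y.1 ∨ y.1 <+: x.1) ∧
    (∀ w, y.1 = x.1 ++ w → ∀ m ∈ w, m.1 ≠ (x.1.getLast x.2).1) := by
  rcases h.2 with ⟨r, v, hv, ⟨i, hi⟩, ⟨j, hj⟩⟩ | h | h
  · subst hi hj
    exact ⟨hv.1 i j, hv.2.1 i j⟩
  · exact ⟨h.1, h.2.1⟩
  · exact ⟨h.1.symm, h.2.2.1⟩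

lemma prefixes_finite {M : Type} (l : List M) : {s | s <+: l}.Finite := by
  refine (Set.finite_range fun n : Fin (l.length + 1) => l.take n).subset ?_
  intro s hs
  exact ⟨⟨s.length, Nat.lt_succ_of_le hs.length_le⟩, (List.prefix_iff_eq_take.1 hs).symm⟩

lemma FP_coalg {α : Type} (A : Str V α) : (FP V k A).IsCoalg := by
  refine ⟨fun x => List.prefix_refl _, fun x y z => List.IsPrefix.trans, fun x y h1 h2 => ?_,
    fun x => ⟨?_, fun y z => List.prefix_or_prefix_of_prefix⟩, fun x y h => (FP_adj A h).1, ?_⟩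
  · exact Subtype.ext (h1.eq_of_length (le_antisymm h1.length_le h2.length_le))
  · exact Set.Finite.preimage (f := Subtype.val) Subtype.val_injective.injOn
      (prefixes_finite x.1)
  · rintro x y h ⟨w, hw⟩ hne z ⟨u, hu⟩ hz ⟨t, ht⟩
    have hune : u ≠ [] := by
      rintro rfl
      exact hz (Subtype.ext (by simpa using hu))
    have hh := (FP_adj A h).2 (u ++ t) (by rw [← ht, ← hu]; simp) (u.getLast hune)
      (by simp)
    have : z.1.getLast z.2 = u.getLast hune := by
      simp [← hu, List.getLast_append_of_ne_nil, hune]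
    show (x.1.getLast x.2).1 ≠ (z.1.getLast z.2).1
    rw [this]; exact hh.symm

structure Good (Z : PObj V k) (D : Set Z.carrier) : Prop where
  fin : D.Finite
  ch : ∀ x ∈ D, ∀ y ∈ D, Z.le x y ∨ Z.le y x
  down : ∀ x ∈ D, ∀ y, Z.le y x → y ∈ D

lemma Good.path {Z : PObj V k} {D : Set Z.carrier} (h : Good Z D) : (restr Z D).IsPath :=
  ⟨h.fin.to_subtype, fun x y => h.ch _ x.2 _ y.2⟩

/-- The element of the last move. -/
def val {α : Type} (A : Str V α) (x : (FP V k A).carrier) : α := (x.1.getLast x.2).2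

lemma step {Z : PObj V k} (hZ : Z.IsCoalg) {α : Type} (A : Str V α)
    {f : Z.carrier → (FP V k A).carrier} (hpw : IsPWEmb Z (FP V k A) f)
    (hop : IsOpen Z (FP V k A) f) {D : Set Z.carrier} (hD : Good Z D) (i : Fin k) (a : α) :
    ∃ z, z ∉ D ∧ (∀ x ∈ D, Z.le x z) ∧ (∀ y, Z.le y z → y = z ∨ y ∈ D) ∧ Z.peb z = i ∧
      val A (f z) = a := by
  have hL : ∃ L : List (Fin k × α), (∀ x ∈ D, (f x).1 <+: L) ∧
      ((L = [] ∧ D = ∅) ∨ ∃ w ∈ D, (f w).1 = L ∧ ∀ x ∈ D, Z.le x w) := by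
    rcases D.eq_empty_or_nonempty with h | h
    · exact ⟨[], by simp [h], Or.inl ⟨rfl, h⟩⟩
    · obtain ⟨w, hw, hm⟩ := exists_top hZ hD.fin h hD.ch
      exact ⟨(f w).1, fun x hx => hom_mono hZ (FP_coalg A) hpw.1 (hm x hx),
        Or.inr ⟨w, hw, rfl, hm⟩⟩
  obtain ⟨L, hL1, hL2⟩ := hL
  let T : (FP V k A).carrier := ⟨L ++ [(i, a)], by simp⟩
  let E : Set (FP V k A).carrier := {s | s.1 <+: L ++ [(i, a)]}
  have hE : Good (FP V k A) E :=
    ⟨((FP_coalg A).2.2.2.1 T).1, fun x hx y hy => ((FP_coalg A).2.2.2.1 T).2 _ _ hx hy,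
      fun x hx y hy => List.IsPrefix.trans hy hx⟩
  have hT : T ∈ E := List.prefix_refl _
  have hm := restr_val hD.down
  have hfm := hpw.2 _ (restr_coalg hZ D) hD.path _ hm
  have hin : ∀ y : D, f y.1 ∈ E := fun y => (hL1 y.1 y.2).trans (List.prefix_append _ _)
  obtain ⟨d, hd, hdi, hdn⟩ := hop _ _ (restr_coalg hZ D) hD.path (restr_coalg (FP_coalg A) E)
    hE.path _ _ _ (restr_lift (D := E) hfm hin) hm (restr_val hE.down) (fun x => rfl)
  have hfz : f (d ⟨T, hT⟩) = T := hdn ⟨T, hT⟩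
  refine ⟨d ⟨T, hT⟩, fun hz => ?_, ?_, ?_, ?_, ?_⟩
  · have := (hL1 _ hz).length_le
    rw [hfz] at this
    simp [T] at this
  · intro x hx
    rcases hL2 with ⟨-, h⟩ | ⟨w, hw, hwL, hmax⟩
    · simp [h] at hx
    · refine hZ.2.1 _ _ _ (hmax x hx) ?_
      have : Z.le (d ⟨f w, hin ⟨w, hw⟩⟩) (d ⟨T, hT⟩) :=
        hom_mono (restr_coalg (FP_coalg A) E) hZ hd
          (show (f w).1 <+: L ++ [(i, a)] from hin ⟨w, hw⟩)
      rwa [hdi ⟨w, hw⟩] at this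
  · intro y hy
    rcases hL2 with ⟨h, -⟩ | ⟨w, hw, hwL, hmax⟩
    · left
      have hr : (FP V k A).IsRoot T := ((FP_listLike A).root T).2 (by simp [T, h])
      exact hd.2.2.1 ⟨T, hT⟩ (fun y hy => Subtype.ext (hr _ hy)) y hy
    · have hc : (FP V k A).Cover (f w) T :=
        ((FP_listLike A).cover _ _).2 (by simp [T, hwL])
      have hc' : (restr (FP V k A) E).Cover ⟨f w, hin ⟨w, hw⟩⟩ ⟨T, hT⟩ :=
        ⟨hc.1, fun h => hc.2.1 (congrArg Subtype.val h), fun z h1 h2 =>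
          (hc.2.2 z.1 h1 h2).imp (fun h => Subtype.ext h) (fun h => Subtype.ext h)⟩
      have hcz := hd.2.2.2.1 _ _ hc'
      rw [hdi ⟨w, hw⟩] at hcz
      rcases (hZ.2.2.2.1 _).2 _ _ hy hcz.1 with h | h
      · exact Or.inr (hD.down _ hw _ h)
      · rcases hcz.2.2 _ h hy with h | h
        · right; rw [h]; exact hw
        · exact Or.inl h
  · refine (hd.2.2.2.2 ⟨T, hT⟩).trans ?_
    show (T.1.getLast T.2).1 = i
    simp [T]
  · rw [hfz]
    simp [val, T]

lemma Good.insert {Z : PObj V k} (hZ : Z.IsCoalg) {D : Set Z.carrier} (h : Good Z D)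
    {z : Z.carrier} (h1 : ∀ x ∈ D, Z.le x z) (h2 : ∀ y, Z.le y z → y = z ∨ y ∈ D) :
    Good Z (insert z D) := by
  refine ⟨h.fin.insert z, ?_, ?_⟩
  · rintro x (rfl | hx) y (rfl | hy)
    · exact Or.inl (hZ.1 _)
    · exact Or.inr (h1 _ hy)
    · exact Or.inl (h1 _ hx)
    · exact h.ch _ hx _ hy
  · rintro x (rfl | hx) y hy
    · exact h2 y hy
    · exact Or.inr (h.down _ hx _ hy)

lemma act_of {Z : PObj V k} (hZ : Z.IsCoalg) {α : Type} (A : Str V α)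
    {f : Z.carrier → (FP V k A).carrier} (hf : IsHom Z (FP V k A) f)
    {D : Set Z.carrier} (hD : Good Z D) {w w' : Z.carrier} (hw : w ∈ D) (hw' : w' ∈ D)
    (hact : ∀ u ∈ D, Z.le w u → w ≠ u → Z.peb u ≠ Z.peb w) :
    ∀ t, (f w').1 = (f w).1 ++ t → ∀ m ∈ t, m.1 ≠ ((f w).1.getLast (f w).2).1 := by
  intro t ht m hm
  obtain ⟨t1, t2, rfl⟩ := List.append_of_mem hm
  let s : (FP V k A).carrier := ⟨(f w).1 ++ t1 ++ [m], by simp⟩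
  have hs : (FP V k A).le s (f w') := ⟨t2, by rw [ht]; simp [s]⟩
  obtain ⟨x, hx, hxs⟩ := hom_down hZ (FP_coalg A) hf hs
  have hxD := hD.down _ hw' _ hx
  have hlt : (f w).1.length < (f x).1.length := by rw [hxs]; simp [s]
  have hne : w ≠ x := by rintro rfl; omega
  have hle : Z.le w x := by
    rcases hD.ch _ hw _ hxD with h | h
    · exact h
    · have := List.IsPrefix.length_le (hom_mono hZ (FP_coalg A) hf h)
      omega
  have h1 := hact x hxD hle hne
  rw [← hf.2.2.2.2 x, ← hf.2.2.2.2 w, hxs] at h1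
  have h2 : (FP V k A).peb s = m.1 := by
    show (s.1.getLast s.2).1 = _
    simp [s]
  rw [h2] at h1
  exact h1

lemma forward {α β : Type} (A : Str V α) (B : Str V β)
    (H : PosBisimP V k (FP V k A) (FP V k B)) : PPebWin V A B k := by
  obtain ⟨Z₁, Z₂, hZ₁, hZ₂, p, h, q, hp, hpo, hh, hbij, hq, hqo⟩ := H
  refine ⟨fun ρ => ∃ D, Good Z₁ D ∧ ∀ i x y, ρ i = some (x, y) → ∃ w ∈ D, Z₁.peb w = i ∧
    val A (p w) = x ∧ val B (q (h w)) = y ∧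
    ∀ u ∈ D, Z₁.le w u → w ≠ u → Z₁.peb u ≠ Z₁.peb w, ?_, ?_⟩
  · exact ⟨∅, ⟨Set.finite_empty, by simp, by simp⟩, by simp⟩
  rintro ρ ⟨D, hD, hρ⟩
  have hemb := hp.2 _ (restr_coalg hZ₁ D) hD.path _ (restr_val hD.down)
  have hmono : ∀ x ∈ D, ∀ y ∈ D, (p x).1 <+: (p y).1 ∨ (p y).1 <+: (p x).1 :=
    fun x hx y hy => (hD.ch x hx y hy).imp (hom_mono hZ₁ (FP_coalg A) hp.1)
      (hom_mono hZ₁ (FP_coalg A) hp.1)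
  have hext : ∀ z, z ∉ D → (∀ x ∈ D, Z₁.le x z) → (∀ y, Z₁.le y z → y = z ∨ y ∈ D) →
      ∃ D', Good Z₁ D' ∧ ∀ i x y,
        Function.update ρ (Z₁.peb z) (some (val A (p z), val B (q (h z)))) i = some (x, y) →
        ∃ w ∈ D', Z₁.peb w = i ∧ val A (p w) = x ∧ val B (q (h w)) = y ∧
        ∀ u ∈ D', Z₁.le w u → w ≠ u → Z₁.peb u ≠ Z₁.peb w := by
    intro z hz h1 h2
    refine ⟨insert z D, hD.insert hZ₁ h1 h2, fun i x y hi => ?_⟩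
    by_cases hiz : i = Z₁.peb z
    · subst hiz
      simp only [Function.update_self, Option.some.injEq, Prod.mk.injEq] at hi
      refine ⟨z, Or.inl rfl, rfl, hi.1, hi.2, ?_⟩
      rintro u (rfl | hu) h3 h4
      · exact absurd rfl h4
      · exact absurd (hZ₁.2.2.1 _ _ h3 (h1 _ hu)) h4
    · rw [Function.update_of_ne hiz] at hi
      obtain ⟨w, hw, hw1, hw2, hw3, hw4⟩ := hρ i x y hi
      refine ⟨w, Or.inr hw, hw1, hw2, hw3, ?_⟩
      rintro u (rfl | hu) h3 h4
      · rw [hw1]; exact fun h => hiz h.symm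
      · exact hw4 u hu h3 h4
  refine ⟨⟨?_, ?_⟩, ?_, ?_⟩
  · intro i j x x' y y' hi hj hxx
    obtain ⟨w, hw, hw1, hw2, hw3, hw4⟩ := hρ i x y hi
    obtain ⟨w', hw', hw1', hw2', hw3', hw4'⟩ := hρ j x' y' hj
    have h1 : (FP V k A).ieq (p w) (p w') :=
      ⟨hmono _ hw _ hw', act_of hZ₁ A hp.1 hD hw hw' hw4,
        act_of hZ₁ A hp.1 hD hw' hw hw4', by
          have : val A (p w) = val A (p w') := by rw [hw2, hw2', hxx]
          exact this⟩
    have h2 : Z₁.ieq w w' := hemb.2.2.2 ⟨w, hw⟩ ⟨w', hw'⟩ h1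
    have h3 := (hq.1.2.1 _ _ (hh.2.1 _ _ h2)).2.2.2
    rw [← hw3, ← hw3']
    exact h3
  · intro r v g hg hr
    have hex := fun t => hρ (v t) (g t).1 (g t).2 (hg t)
    choose w hw hw1 hw2 hw3 hw4 using hex
    have h1 : (FP V k A).rel r fun t => p (w t) := by
      refine ⟨fun i j => hmono _ (hw i) _ (hw j),
        fun i j => act_of hZ₁ A hp.1 hD (hw i) (hw j) (hw4 i), ?_⟩
      have : (fun i => val A (p (w i))) = fun t => (g t).1 := funext hw2
      rw [← this] at hr
      exact hr
    have h2 : Z₁.rel r w := hemb.2.2.1 r (fun t => ⟨w t, hw t⟩) h1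
    have h3 := (hq.1.1 _ _ (hh.1 _ _ h2)).2.2
    have : (fun i => val B (q (h (w i)))) = fun t => (g t).2 := funext hw3
    rw [← this]
    exact h3
  · intro i a
    obtain ⟨z, hz, h1, h2, rfl, rfl⟩ := step hZ₁ A hp hpo hD i a
    exact ⟨val B (q (h z)), hext z hz h1 h2⟩
  · intro i b
    have hD2 : Good Z₂ (h '' D) := by
      refine ⟨hD.fin.image h, ?_, ?_⟩
      · rintro _ ⟨x, hx, rfl⟩ _ ⟨y, hy, rfl⟩
        exact (hD.ch x hx y hy).imp (hom_mono hZ₁ hZ₂ hh) (hom_mono hZ₁ hZ₂ hh)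
      · rintro _ ⟨x, hx, rfl⟩ y hy
        obtain ⟨u, hu, rfl⟩ := hom_down hZ₁ hZ₂ hh hy
        exact ⟨u, hD.down _ hx _ hu, rfl⟩
    have hrefl : ∀ x y, Z₂.le (h x) (h y) → Z₁.le x y := by
      intro x y hxy
      obtain ⟨u, hu, hux⟩ := hom_down hZ₁ hZ₂ hh hxy
      rwa [← hbij.1 hux]
    obtain ⟨z₂, hz, h1, h2, h3, rfl⟩ := step hZ₂ B hq hqo hD2 i b
    obtain ⟨z, rfl⟩ := hbij.2 z₂
    rw [hh.2.2.2.2] at h3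
    subst h3
    refine ⟨val A (p z), hext z (fun h' => hz ⟨z, h', rfl⟩)
      (fun x hx => hrefl _ _ (h1 _ ⟨x, hx, rfl⟩)) fun y hy => ?_⟩
    rcases h2 (h y) (hom_mono hZ₁ hZ₂ hh hy) with h4 | ⟨x, hx, hxy⟩
    · exact Or.inl (hbij.1 h4)
    · right; rwa [← hbij.1 hxy]

section Tree

variable {γ δ : Type}

/-- The tree of nonempty lists in `W`, with relations pulled back from `A` along `g`. -/
def TObj (W : List (Fin k × γ) → Prop) (g : γ → δ) (A : Str V δ) : PObj V k where
  carrier := {l : List (Fin k × γ) // l ≠ [] ∧ W l}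
  rel r v :=
    (∀ i j, (v i).1 <+: (v j).1 ∨ (v j).1 <+: (v i).1) ∧
    (∀ i j w, (v j).1 = (v i).1 ++ w →
      ∀ m ∈ w, m.1 ≠ ((v i).1.getLast (v i).2.1).1) ∧
    A.rel r fun i => g ((v i).1.getLast (v i).2.1).2
  ieq s t :=
    ((s.1 <+: t.1) ∨ (t.1 <+: s.1)) ∧
    (∀ w, t.1 = s.1 ++ w → ∀ m ∈ w, m.1 ≠ (s.1.getLast s.2.1).1) ∧
    (∀ w, s.1 = t.1 ++ w → ∀ m ∈ w, m.1 ≠ (t.1.getLast t.2.1).1) ∧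
    g (s.1.getLast s.2.1).2 = g (t.1.getLast t.2.1).2
  le s t := s.1 <+: t.1
  peb s := (s.1.getLast s.2.1).1

/-- Projection of the tree object. -/
def proj (W : List (Fin k × γ) → Prop) (g : γ → δ) (A : Str V δ)
    (x : (TObj W g A).carrier) : (FP V k A).carrier :=
  ⟨x.1.map (Prod.map id g), by simpa using x.2.1⟩

lemma act_iff (g : γ → δ) {l₁ l₂ : List (Fin k × γ)} (hc : l₁ <+: l₂ ∨ l₂ <+: l₁)
    (h₁ : l₁ ≠ []) (h₁' : l₁.map (Prod.map id g) ≠ []) :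
    (∀ w, l₂.map (Prod.map id g) = l₁.map (Prod.map id g) ++ w →
      ∀ m ∈ w, m.1 ≠ ((l₁.map (Prod.map id g)).getLast h₁').1) ↔
    (∀ w, l₂ = l₁ ++ w → ∀ m ∈ w, m.1 ≠ (l₁.getLast h₁).1) := by
  have hl : ((l₁.map (Prod.map id g)).getLast h₁').1 = (l₁.getLast h₁).1 := by
    simp [List.getLast_map]
  rw [hl]
  constructor
  · intro h w hw m hm
    exact h (w.map (Prod.map id g)) (by rw [hw]; simp) (Prod.map id g m)
      (List.mem_map_of_mem hm)
  · intro h w hw m hm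
    rcases hc with ⟨t, ht⟩ | ⟨t, ht⟩
    · rw [← ht, List.map_append, List.append_cancel_left_eq] at hw
      subst hw
      obtain ⟨m', hm', rfl⟩ := List.mem_map.1 hm
      exact h t ht.symm m' hm'
    · rw [← ht, List.map_append] at hw
      have := congrArg List.length hw
      simp only [List.length_append, List.length_map] at this
      have : w = [] := List.length_eq_zero_iff.1 (by omega)
      subst this
      simp at hm

variable (W : List (Fin k × γ) → Prop) (g : γ → δ) (A : Str V δ)

lemma last_proj (x : (TObj W g A).carrier) (h) :
    ((proj W g A x).1.getLast h).2 = g (x.1.getLast x.2.1).2 := by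
  simp [proj, List.getLast_map]

lemma peb_proj (x : (TObj W g A).carrier) :
    (FP V k A).peb (proj W g A x) = (TObj W g A).peb x := by
  simp [proj, List.getLast_map, FP, TObj]

lemma rel_iff (r : V.Rel) (v : Fin (V.ar r) → (TObj W g A).carrier) :
    (TObj W g A).rel r v ↔
      (∀ i j, (TObj W g A).le (v i) (v j) ∨ (TObj W g A).le (v j) (v i)) ∧
      (FP V k A).rel r fun i => proj W g A (v i) := by
  constructor
  · rintro ⟨h1, h2, h3⟩
    refine ⟨h1, fun i j => (h1 i j).imp (fun h => h.map _) (fun h => h.map _),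
      fun i j => (act_iff g (h1 i j) (v i).2.1 _).2 (h2 i j), ?_⟩
    simpa only [last_proj] using h3
  · rintro ⟨h1, h2, h3, h4⟩
    refine ⟨h1, fun i j => (act_iff g (h1 i j) (v i).2.1 _).1 (h3 i j), ?_⟩
    simpa only [last_proj] using h4

lemma ieq_iff (x y : (TObj W g A).carrier) :
    (TObj W g A).ieq x y ↔
      ((TObj W g A).le x y ∨ (TObj W g A).le y x) ∧
      (FP V k A).ieq (proj W g A x) (proj W g A y) := by
  constructor
  · rintro ⟨h1, h2, h3, h4⟩
    refine ⟨h1, h1.imp (fun h => h.map _) (fun h => h.map _),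
      (act_iff g h1 x.2.1 _).2 h2, (act_iff g h1.symm y.2.1 _).2 h3, ?_⟩
    simpa only [last_proj] using h4
  · rintro ⟨h1, h2, h3, h4, h5⟩
    refine ⟨h1, (act_iff g h1 x.2.1 _).1 h3, (act_iff g h1.symm y.2.1 _).1 h4, ?_⟩
    simpa only [last_proj] using h5

variable (hcl : ∀ l l', l' <+: l → W l → W l')

include hcl in
lemma T_listLike : ListLike (TObj W g A) (M := Fin k × γ) (fun x => x.1) where
  inj := Subtype.val_injective
  le _ _ := Iff.rfl
  ne x := x.2.1
  cl x l h hp := ⟨⟨l, h, hcl _ _ hp x.2.2⟩, rfl⟩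

lemma proj_inj {x y : (TObj W g A).carrier} (h : (TObj W g A).le x y ∨ (TObj W g A).le y x)
    (he : proj W g A x = proj W g A y) : x = y := by
  have hl : x.1.length = y.1.length := by
    have := congrArg (fun z : (FP V k A).carrier => z.1.length) he
    simpa [proj] using this
  rcases h with h | h
  · exact Subtype.ext (List.IsPrefix.eq_of_length h hl)
  · exact Subtype.ext (List.IsPrefix.eq_of_length h hl.symm).symm

lemma T_adj {x y : (TObj W g A).carrier} (h : (TObj W g A).Adj x y) :
    ((TObj W g A).le x y ∨ (TObj W g A).le y x) ∧
    (FP V k A).Adj (proj W g A x) (proj W g A y) := by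
  have key : ((TObj W g A).le x y ∨ (TObj W g A).le y x) := by
    rcases h.2 with ⟨r, v, hv, ⟨i, hi⟩, ⟨j, hj⟩⟩ | h | h
    · subst hi hj; exact hv.1 i j
    · exact h.1
    · exact h.1.symm
  refine ⟨key, fun he => h.1 (proj_inj W g A key he), ?_⟩
  rcases h.2 with ⟨r, v, hv, ⟨i, hi⟩, ⟨j, hj⟩⟩ | h | h
  · exact Or.inl ⟨r, _, ((rel_iff W g A r v).1 hv).2, ⟨i, by rw [hi]⟩, ⟨j, by rw [hj]⟩⟩
  · exact Or.inr (Or.inl ((ieq_iff W g A _ _).1 h).2)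
  · exact Or.inr (Or.inr ((ieq_iff W g A _ _).1 h).2)

lemma T_coalg : (TObj W g A).IsCoalg := by
  refine ⟨fun x => List.prefix_refl _, fun x y z => List.IsPrefix.trans, fun x y h1 h2 => ?_,
    fun x => ⟨?_, fun y z => List.prefix_or_prefix_of_prefix⟩,
    fun x y h => (T_adj W g A h).1, ?_⟩
  · exact Subtype.ext (h1.eq_of_length (le_antisymm h1.length_le h2.length_le))
  · exact Set.Finite.preimage (f := Subtype.val) Subtype.val_injective.injOn
      (prefixes_finite x.1)
  · intro x y h hle hne z h1 h2 h3
    rw [← peb_proj, ← peb_proj]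
    exact (FP_coalg A).2.2.2.2.2 _ _ (T_adj W g A h).2 (List.IsPrefix.map _ hle)
      (fun he => hne (proj_inj W g A (Or.inl hle) he)) _ (List.IsPrefix.map _ h1)
      (fun he => h2 (proj_inj W g A (Or.inl h1) he)) (List.IsPrefix.map _ h3)

include hcl in
lemma proj_hom : IsHom (TObj W g A) (FP V k A) (proj W g A) := by
  refine ⟨fun r v h => ((rel_iff W g A r v).1 h).2, fun x y h => ((ieq_iff W g A x y).1 h).2,
    fun x h => ?_, fun x y h => ?_, fun x => peb_proj W g A x⟩
  · have := ((T_listLike W g A hcl).root x).1 h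
    exact ((FP_listLike A).root _).2 (by simpa [proj] using this)
  · have := ((T_listLike W g A hcl).cover x y).1 h
    exact ((FP_listLike A).cover _ _).2 ⟨this.1.map _, by simpa [proj] using this.2⟩

include hcl in
lemma proj_pw : IsPWEmb (TObj W g A) (FP V k A) (proj W g A) := by
  have hp := proj_hom W g A hcl
  refine ⟨hp, fun P hP hPp m hm => ?_⟩
  have hch : ∀ x y, (TObj W g A).le (m x) (m y) ∨ (TObj W g A).le (m y) (m x) := fun x y =>
    (hPp.2 x y).imp (hom_mono hP (T_coalg W g A) hm.1) (hom_mono hP (T_coalg W g A) hm.1)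
  refine ⟨⟨fun r v h => hp.1 _ _ (hm.1.1 r v h), fun x y h => hp.2.1 _ _ (hm.1.2.1 x y h),
    fun x h => hp.2.2.1 _ (hm.1.2.2.1 x h), fun x y h => hp.2.2.2.1 _ _ (hm.1.2.2.2.1 x y h),
    fun x => (hp.2.2.2.2 _).trans (hm.1.2.2.2.2 x)⟩, ?_, ?_, ?_⟩
  · intro x y h
    exact hm.2.1 (proj_inj W g A (hch x y) h)
  · intro r v h
    exact hm.2.2.1 r v ((rel_iff W g A r _).2 ⟨fun i j => hch _ _, h⟩)
  · intro x y h
    exact hm.2.2.2 x y ((ieq_iff W g A _ _).2 ⟨hch _ _, h⟩)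

lemma lift_list
    (hext : ∀ l, W l → ∀ (p : Fin k) (a : δ), ∃ c, g c = a ∧ W (l ++ [(p, c)]))
    (M : List (Fin k × γ)) (hM : W M) (t : List (Fin k × δ)) :
    ∃ M', W M' ∧ M <+: M' ∧ M'.map (Prod.map id g) = M.map (Prod.map id g) ++ t := by
  induction t generalizing M with
  | nil => exact ⟨M, hM, List.prefix_refl _, by simp⟩
  | cons a t ih =>
    obtain ⟨c, hc, hW⟩ := hext M hM a.1 a.2
    obtain ⟨M', h1, h2, h3⟩ := ih _ hW
    exact ⟨M', h1, (List.prefix_append _ _).trans h2, by rw [h3]; simp [hc]⟩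

lemma list_top {X P : PObj V k} {M : Type} {e : X.carrier → List M} (he : ListLike X e)
    (hX : X.IsCoalg) (hP : P.IsCoalg) (hPp : P.IsPath) {m : P.carrier → X.carrier}
    (hm : IsHom P X m) :
    ∃ L : List M, (∀ x, e (m x) <+: L) ∧ (L = [] ∨ ∃ x, L = e (m x)) := by
  rcases isEmpty_or_nonempty P.carrier with h | h
  · exact ⟨[], fun x => h.elim x, Or.inl rfl⟩
  · have := hPp.1
    obtain ⟨w, -, hw⟩ := exists_top hP Set.finite_univ Set.univ_nonempty
      (fun x _ y _ => hPp.2 x y)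
    exact ⟨e (m w), fun x => (he.le _ _).1 (hom_mono hP hX hm (hw x trivial)), Or.inr ⟨w, rfl⟩⟩

include hcl in
lemma proj_open (h0 : W [])
    (hext : ∀ l, W l → ∀ (p : Fin k) (a : δ), ∃ c, g c = a ∧ W (l ++ [(p, c)])) :
    IsOpen (TObj W g A) (FP V k A) (proj W g A) := by
  intro P Q hP hPp hQ hQp i m n hi hm hn hsq
  obtain ⟨L, hL, -⟩ := list_top (FP_listLike A) (FP_coalg A) hQ hQp hn.1
  obtain ⟨M, hM, hM'⟩ := list_top (T_listLike W g A hcl) (T_coalg W g A) hP hPp hm.1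
  have hWM : W M ∧ M.map (Prod.map id g) <+: L := by
    rcases hM' with rfl | ⟨x, rfl⟩
    · exact ⟨h0, by simp⟩
    · refine ⟨(m x).2.2, ?_⟩
      have := hL (i x)
      rw [hsq] at this
      exact this
  obtain ⟨hWM, t, ht⟩ := hWM
  obtain ⟨M', hWM', hpre, hmap⟩ := lift_list W g hext M hWM t
  rw [ht] at hmap
  let d : Q.carrier → (TObj W g A).carrier := fun q =>
    ⟨M'.take (n q).1.length, by
      have h1 := List.length_pos_iff.2 (n q).2
      have h2 := (hL q).length_le
      rw [← hmap, List.length_map] at h2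
      apply List.length_pos_iff.1
      rw [List.length_take]
      omega, hcl _ _ (List.take_prefix _ _) hWM'⟩
  have hlen : ∀ q, (d q).1.length = (n q).1.length := by
    intro q
    have h2 := (hL q).length_le
    rw [← hmap, List.length_map] at h2
    show (M'.take (n q).1.length).length = _
    rw [List.length_take]
    omega
  have hproj : ∀ q, proj W g A (d q) = n q := by
    intro q
    apply Subtype.ext
    show (M'.take (n q).1.length).map _ = _
    rw [List.map_take, hmap]
    exact (List.prefix_iff_eq_take.1 (hL q)).symm
  have hch : ∀ q q', (TObj W g A).le (d q) (d q') ∨ (TObj W g A).le (d q') (d q) :=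
    fun q q' => List.prefix_or_prefix_of_prefix (List.take_prefix _ _) (List.take_prefix _ _)
  refine ⟨d, ⟨fun r v h => ?_, fun x y h => ?_, fun x h => ?_, fun x y h => ?_, fun x => ?_⟩,
    fun x => ?_, hproj⟩
  · refine (rel_iff W g A r _).2 ⟨fun i j => hch _ _, ?_⟩
    simp only [hproj]
    exact hn.1.1 r v h
  · refine (ieq_iff W g A _ _).2 ⟨hch _ _, ?_⟩
    simp only [hproj]
    exact hn.1.2.1 x y h
  · refine ((T_listLike W g A hcl).root _).2 ((hlen x).trans ?_)
    exact ((FP_listLike A).root _).1 (hn.1.2.2.1 x h)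
  · have hc := ((FP_listLike A).cover _ _).1 (hn.1.2.2.2.1 x y h)
    refine ((T_listLike W g A hcl).cover _ _).2 ⟨?_, ?_⟩
    · exact List.take_prefix_take_left hc.1.length_le
    · have := hc.2
      show (d y).1.length = (d x).1.length + 1
      rw [hlen, hlen]; exact this
  · rw [← peb_proj, hproj]
    exact hn.1.2.2.2.2 x
  · apply Subtype.ext
    show M'.take (n (i x)).1.length = (m x).1
    have h1 : (m x).1 <+: M' := (hM x).trans hpre
    rw [hsq]
    have : (proj W g A (m x)).1.length = (m x).1.length := by simp [proj]
    rw [this]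
    exact (List.prefix_iff_eq_take.1 h1).symm

end Tree

/-- The position reached after a list of moves. -/
def pos {γ : Type} (l : List (Fin k × γ)) : Fin k → Option γ :=
  l.foldl (fun ρ m => Function.update ρ m.1 (some m.2)) (fun _ => none)

lemma pos_concat {γ : Type} (l : List (Fin k × γ)) (m : Fin k × γ) :
    pos (l ++ [m]) = Function.update (pos l) m.1 (some m.2) := by
  simp [pos]

lemma pos_act {γ : Type} (l w : List (Fin k × γ)) (h : l ≠ [])
    (hw : ∀ m ∈ w, m.1 ≠ (l.getLast h).1) :
    pos (l ++ w) (l.getLast h).1 = some (l.getLast h).2 := by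
  induction w using List.reverseRecOn with
  | nil =>
    have h1 := List.dropLast_append_getLast h
    have h2 := pos_concat l.dropLast (l.getLast h)
    rw [h1] at h2
    rw [List.append_nil, h2]
    simp
  | append_singleton w m ih =>
    rw [← List.append_assoc, pos_concat, Function.update_of_ne (hw m (by simp)).symm]
    exact ih fun m hm => hw m (by simp [hm])

lemma backward (har : ∀ r : V.Rel, V.ar r ≠ 0) {α β : Type} (A : Str V α) (B : Str V β)
    (H : PPebWin V A B k) : PosBisimP V k (FP V k A) (FP V k B) := by
  obtain ⟨S, hS0, hS⟩ := H
  let W : List (Fin k × (α × β)) → Prop := fun l => ∀ l', l' <+: l → S (pos l')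
  have hcl : ∀ l l', l' <+: l → W l → W l' := fun l l' h hl l'' h' => hl _ (h'.trans h)
  have h0 : W [] := by
    intro l' hl
    rw [List.prefix_nil.1 hl]
    exact hS0
  have hadd : ∀ l, W l → ∀ m, S (Function.update (pos l) m.1 (some m.2)) → W (l ++ [m]) := by
    intro l hl m hm l' hl'
    rcases List.prefix_concat_iff.1 hl' with rfl | h
    · rw [pos_concat]; exact hm
    · exact hl _ h
  have hextA : ∀ l, W l → ∀ (p : Fin k) (a : α),
      ∃ c : α × β, Prod.fst c = a ∧ W (l ++ [(p, c)]) := by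
    intro l hl p a
    obtain ⟨b, hb⟩ := (hS _ (hl l (List.prefix_refl _))).2.1 p a
    exact ⟨(a, b), rfl, hadd l hl _ hb⟩
  have hextB : ∀ l, W l → ∀ (p : Fin k) (b : β),
      ∃ c : α × β, Prod.snd c = b ∧ W (l ++ [(p, c)]) := by
    intro l hl p b
    obtain ⟨a, ha⟩ := (hS _ (hl l (List.prefix_refl _))).2.2 p b
    exact ⟨(a, b), rfl, hadd l hl _ ha⟩
  have hact : ∀ s t : List (Fin k × (α × β)), ∀ hs : s ≠ [], s <+: t →
      (∀ w, t = s ++ w → ∀ m ∈ w, m.1 ≠ (s.getLast hs).1) →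
      pos t (s.getLast hs).1 = some (s.getLast hs).2 := by
    rintro s _ hs ⟨w, rfl⟩ h
    exact pos_act s w hs (h w rfl)
  refine ⟨TObj W Prod.fst A, TObj W Prod.snd B, T_coalg _ _ _, T_coalg _ _ _,
    proj _ _ _, id, proj _ _ _, proj_pw _ _ _ hcl, proj_open _ _ _ hcl h0 hextA,
    ⟨?_, ?_, fun x h => h, fun x y h => h, fun x => rfl⟩, Function.bijective_id,
    proj_pw _ _ _ hcl, proj_open _ _ _ hcl h0 hextB⟩
  · rintro r v ⟨h1, h2, h3⟩
    refine ⟨h1, h2, ?_⟩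
    have : Nonempty (Fin (V.ar r)) := ⟨⟨0, Nat.pos_of_ne_zero (har r)⟩⟩
    obtain ⟨_, ⟨j, rfl⟩, hj⟩ := exists_top (T_coalg W Prod.fst A) (Set.finite_range v)
      (Set.range_nonempty v) (by rintro _ ⟨i, rfl⟩ _ ⟨j, rfl⟩; exact h1 i j)
    exact (hS _ ((v j).2.2 _ (List.prefix_refl _))).1.2 r
      (fun t => ((v t).1.getLast (v t).2.1).1) (fun t => ((v t).1.getLast (v t).2.1).2)
      (fun t => hact _ _ (v t).2.1 (hj _ ⟨t, rfl⟩) (h2 t j)) h3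
  · rintro x y ⟨h1, h2, h3, h4⟩
    refine ⟨h1, h2, h3, ?_⟩
    rcases h1 with h | h
    · exact (hS _ (y.2.2 _ (List.prefix_refl _))).1.1 _ _ _ _ _ _
        (hact _ _ x.2.1 h h2) (hact _ _ y.2.1 (List.prefix_refl _)
          (fun w hw => by simp at hw; simp [hw])) h4
    · exact (hS _ (x.2.2 _ (List.prefix_refl _))).1.1 _ _ _ _ _ _
        (hact _ _ x.2.1 (List.prefix_refl _) (fun w hw => by simp at hw; simp [hw]))
        (hact _ _ y.2.1 h h3) h4

end Bis

/-- there exists a positive bisimulation from `F_k^I(A)` to `F_k^I(B)` in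
`EM(P_k^I)` if, and only if, Duplicator has a winning strategy in the positive
`k`-pebble game from `A` to `B`. -/
theorem positive_bisimulation_iff_positive_pebble_game
    (V : Vocab) [Finite V.Rel] (har : ∀ r : V.Rel, V.ar r ≠ 0)
    {α β : Type} (A : Str V α) (B : Str V β) (k : ℕ) (hk : 0 < k) :
    PosBisimP V k (FP V k A) (FP V k B) ↔ PPebWin V A B k :=
  ⟨Bis.forward A B, Bis.backward har A B⟩
end

section
/- For all σ-structures A and B and every positive integer k, the following are equivalent: (i) A and B satisfy the same sentences of ⁺L^k; (ii) there exist objects Z, Z′ of EM(P_k^I) together with morphisms p : Z → F_k^I(A), q : Z → F_k^I(B), p′ : Z′ → F_k^I(B), q′ : Z′ → F_k^I(A) such that p and p′ are open pathwise embeddings and q and q′ are each a composition of a bijection followed by an open pathwise embedding. -/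
/-- `q : Z → Y` is the composition of a bijection followed by an open pathwise
embedding, in `EM(P_k^I)`. -/
def BijThenOpenP (V : Vocab) (k : ℕ) (Z Y : PObj V k)
    (q : Z.carrier → Y.carrier) : Prop :=
  ∃ W : PObj V k, PObj.IsCoalg W ∧
    ∃ (u : Z.carrier → W.carrier) (v : W.carrier → Y.carrier),
      PObj.IsHom Z W u ∧ Function.Bijective u ∧
      PObj.IsPWEmb W Y v ∧ PObj.IsOpen W Y v ∧ ∀ z, q z = v (u z)

namespace PObj

variable {V : Vocab} {k : ℕ}

def dn (X : PObj V k) (x : X.carrier) : Set X.carrier := {y | X.le y x}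

theorem IsCoalg.exists_pred {X : PObj V k} (hX : X.IsCoalg) {x y : X.carrier}
    (h : X.le x y) (hne : x ≠ y) : ∃ y', X.le x y' ∧ X.Cover y' y := by
  obtain ⟨h1, h2, h3, h4, -, -⟩ := hX
  let _ : PartialOrder X.carrier :=
    { le := X.le, le_refl := h1, le_trans := h2, le_antisymm := h3 }
  have hfin : {z | X.le x z ∧ X.le z y ∧ z ≠ y}.Finite :=
    (h4 y).1.subset (fun z hz => hz.2.1)
  obtain ⟨m, hm⟩ := hfin.exists_maximal ⟨x, h1 x, h, hne⟩
  refine ⟨m, hm.1.1, hm.1.2.1, hm.1.2.2, fun z hz hzy => ?_⟩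
  by_cases hz' : z = y
  · exact Or.inr hz'
  · exact Or.inl (h3 _ _ (hm.2 ⟨h2 _ _ _ hm.1.1 hz, hzy, hz'⟩ hz) hz)

theorem IsCoalg.wf {X : PObj V k} (hX : X.IsCoalg) :
    WellFounded (fun x y => X.le x y ∧ x ≠ y) := by
  obtain ⟨h1, h2, h3, h4, -, -⟩ := hX
  have : ∀ x y, X.le x y ∧ x ≠ y → (X.dn x).ncard < (X.dn y).ncard := by
    rintro x y ⟨h, hne⟩
    apply Set.ncard_lt_ncard _ (h4 y).1
    refine ⟨fun z hz => h2 _ _ _ hz h, fun hh => hne (h3 _ _ h (hh (h1 y)))⟩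
  exact Subrelation.wf (fun {x y} h => this x y h) (measure fun x => (X.dn x).ncard).wf

theorem IsCoalg.ind {X : PObj V k} (hX : X.IsCoalg) {C : X.carrier → Prop}
    (hr : ∀ x, X.IsRoot x → C x) (hs : ∀ x y, X.Cover x y → C x → C y) (x) : C x := by
  induction x using hX.wf.induction with
  | _ x ih =>
    by_cases hx : X.IsRoot x
    · exact hr x hx
    · simp only [IsRoot, not_forall] at hx
      obtain ⟨y, hy, hne⟩ := hx
      obtain ⟨y', -, hc⟩ := hX.exists_pred hy hne
      exact hs _ _ hc (ih y' ⟨hc.1, hc.2.1⟩)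

theorem IsCoalg.ind_le {X : PObj V k} (hX : X.IsCoalg) {C : X.carrier → Prop} {x₀ : X.carrier}
    (h0 : C x₀) (hs : ∀ x y, X.le x₀ x → X.Cover x y → C x → C y) (x) (hx : X.le x₀ x) : C x := by
  induction x using hX.wf.induction with
  | _ x ih =>
    by_cases he : x₀ = x
    · exact he ▸ h0
    · obtain ⟨y', hy, hc⟩ := hX.exists_pred hx he
      exact hs _ _ hy hc (ih y' ⟨hc.1, hc.2.1⟩ hy)

theorem IsHom.mono {X Y : PObj V k} (hX : X.IsCoalg) (hY : Y.IsCoalg) {f} (hf : IsHom X Y f)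
    {x y} (h : X.le x y) : Y.le (f x) (f y) :=
  hX.ind_le (C := fun y => Y.le (f x) (f y)) (hY.1 _)
    (fun _ _ _ hc ih => hY.2.1 _ _ _ ih (hf.2.2.2.1 _ _ hc).1) y h

theorem IsHom.comp {X Y Z : PObj V k} {f g} (hf : IsHom X Y f) (hg : IsHom Y Z g) :
    IsHom X Z (fun x => g (f x)) :=
  ⟨fun r v h => hg.1 r _ (hf.1 r v h), fun x y h => hg.2.1 _ _ (hf.2.1 x y h),
   fun x h => hg.2.2.1 _ (hf.2.2.1 x h), fun x y h => hg.2.2.2.1 _ _ (hf.2.2.2.1 x y h),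
   fun x => (hg.2.2.2.2 _).trans (hf.2.2.2.2 x)⟩

/-- Induced substructure. -/
def sub (X : PObj V k) (S : Set X.carrier) : PObj V k where
  carrier := {x // x ∈ S}
  rel r v := X.rel r (fun i => (v i).1)
  ieq x y := X.ieq x.1 y.1
  le x y := X.le x.1 y.1
  peb x := X.peb x.1

theorem sub_adj (X : PObj V k) (S : Set X.carrier) {x y : (X.sub S).carrier}
    (h : (X.sub S).Adj x y) : X.Adj x.1 y.1 := by
  refine ⟨fun e => h.1 (Subtype.ext e), ?_⟩
  rcases h.2 with ⟨r, v, h1, ⟨i, hi⟩, ⟨j, hj⟩⟩ | h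
  · exact Or.inl ⟨r, _, h1, ⟨i, by rw [hi]⟩, ⟨j, by rw [hj]⟩⟩
  · exact Or.inr h

theorem sub_coalg {X : PObj V k} (hX : X.IsCoalg) (S : Set X.carrier) : (X.sub S).IsCoalg := by
  obtain ⟨h1, h2, h3, h4, h5, h6⟩ := hX
  refine ⟨fun x => h1 _, fun x y z => h2 _ _ _, fun x y h h' => Subtype.ext (h3 _ _ h h'),
    fun x => ⟨?_, fun y z => (h4 x.1).2 _ _⟩, fun x y h => h5 _ _ (sub_adj X S h), ?_⟩
  · exact Set.Finite.preimage (f := Subtype.val) (s := {y | X.le y x.1})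
      (Subtype.val_injective.injOn) (h4 x.1).1
  · intro x y h hl hne z hz hne' hzy
    exact h6 _ _ (sub_adj X S h) hl (fun e => hne (Subtype.ext e)) z.1 hz
      (fun e => hne' (Subtype.ext e)) hzy

def DownC (X : PObj V k) (S : Set X.carrier) : Prop := ∀ x y, X.le x y → y ∈ S → x ∈ S

theorem sub_root {X : PObj V k} {S : Set X.carrier} (hS : X.DownC S) (x : (X.sub S).carrier) :
    (X.sub S).IsRoot x ↔ X.IsRoot x.1 :=
  ⟨fun h y hy => congrArg Subtype.val (h ⟨y, hS _ _ hy x.2⟩ hy),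
   fun h y hy => Subtype.ext (h y.1 hy)⟩

theorem sub_cover {X : PObj V k} {S : Set X.carrier} (hS : X.DownC S) (x y : (X.sub S).carrier) :
    (X.sub S).Cover x y ↔ X.Cover x.1 y.1 := by
  constructor
  · rintro ⟨h1, h2, h3⟩
    refine ⟨h1, fun e => h2 (Subtype.ext e), fun z hz hz' => ?_⟩
    rcases h3 ⟨z, hS _ _ hz' y.2⟩ hz hz' with h | h
    · exact Or.inl (congrArg Subtype.val h)
    · exact Or.inr (congrArg Subtype.val h)
  · rintro ⟨h1, h2, h3⟩
    refine ⟨h1, fun e => h2 (congrArg Subtype.val e), fun z hz hz' => ?_⟩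
    rcases h3 z.1 hz hz' with h | h
    · exact Or.inl (Subtype.ext h)
    · exact Or.inr (Subtype.ext h)

theorem sub_emb {X : PObj V k} {S : Set X.carrier} (hS : X.DownC S) :
    IsEmb (X.sub S) X Subtype.val :=
  ⟨⟨fun _ _ h => h, fun _ _ h => h, fun x h => (sub_root hS x).1 h,
    fun x y h => (sub_cover hS x y).1 h, fun _ => rfl⟩, Subtype.val_injective,
    fun _ _ h => h, fun _ _ h => h⟩

theorem dn_downC {X : PObj V k} (hX : X.IsCoalg) (x : X.carrier) : X.DownC (X.dn x) :=
  fun _ _ h h' => hX.2.1 _ _ _ h h'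

theorem dn_path {X : PObj V k} (hX : X.IsCoalg) (x : X.carrier) : (X.sub (X.dn x)).IsPath :=
  ⟨(hX.2.2.2.1 x).1, fun y z => (hX.2.2.2.1 x).2 _ _ y.2 z.2⟩

theorem IsPath.exists_max {X : PObj V k} (hX : X.IsCoalg) (hp : X.IsPath) [Nonempty X.carrier] :
    ∃ m, ∀ x, X.le x m := by
  obtain ⟨hf, hl⟩ := hp
  obtain ⟨h1, h2, h3, h4, -, -⟩ := hX
  let _ : PartialOrder X.carrier :=
    { le := X.le, le_refl := h1, le_trans := h2, le_antisymm := h3 }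
  obtain ⟨m, hm⟩ := (Set.toFinite (Set.univ : Set X.carrier)).exists_maximal Set.univ_nonempty
  refine ⟨m, fun x => ?_⟩
  rcases hl x m with h | h
  · exact h
  · exact hm.2 trivial h

end PObj

section lists
variable {V : Vocab} {k : ℕ}

/-- Generalised cofree coalgebra, with `I` interpreted by `E`. -/
def GFP (V : Vocab) (k : ℕ) {γ : Type} (A : Str V γ) (E : γ → γ → Prop) : PObj V k where
  carrier := {l : List (Fin k × γ) // l ≠ []}
  rel r v :=
    (∀ i j, (v i).1 <+: (v j).1 ∨ (v j).1 <+: (v i).1) ∧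
    (∀ i j w, (v j).1 = (v i).1 ++ w →
      ∀ m ∈ w, m.1 ≠ ((v i).1.getLast (v i).2).1) ∧
    A.rel r fun i => ((v i).1.getLast (v i).2).2
  ieq s t :=
    ((s.1 <+: t.1) ∨ (t.1 <+: s.1)) ∧
    (∀ w, t.1 = s.1 ++ w → ∀ m ∈ w, m.1 ≠ (s.1.getLast s.2).1) ∧
    (∀ w, s.1 = t.1 ++ w → ∀ m ∈ w, m.1 ≠ (t.1.getLast t.2).1) ∧
    E (s.1.getLast s.2).2 (t.1.getLast t.2).2
  le s t := s.1 <+: t.1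
  peb s := (s.1.getLast s.2).1

theorem FP_eq {α : Type} (A : Str V α) : FP V k A = GFP V k A Eq := rfl

theorem GFP_coalg {γ : Type} (A : Str V γ) (E : γ → γ → Prop) : (GFP V k A E).IsCoalg := by
  refine ⟨fun x => List.prefix_rfl, fun x y z h h' => List.IsPrefix.trans h h',
    fun x y h h' => Subtype.ext (h.eq_of_length_le h'.length_le), fun x => ⟨?_, ?_⟩, ?_, ?_⟩
  · have : {l : List (Fin k × γ) | l <+: x.1}.Finite := by
      apply (List.finite_toSet x.1.inits).subset
      intro l hl
      exact (List.mem_inits _ _).2 hl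
    exact Set.Finite.preimage (f := Subtype.val) (Subtype.val_injective.injOn) this
  · intro y z hy hz
    exact List.prefix_or_prefix_of_prefix hy hz
  · rintro x y ⟨-, ⟨r, v, h, ⟨i, rfl⟩, ⟨j, rfl⟩⟩ | h | h⟩
    · exact h.1 i j
    · exact h.1
    · exact h.1.symm
  · intro x y h hl hne z hz hne' hzy
    have key : ∀ w, y.1 = x.1 ++ w → ∀ m ∈ w, m.1 ≠ (x.1.getLast x.2).1 := by
      rcases h with ⟨-, ⟨r, v, h, ⟨i, rfl⟩, ⟨j, rfl⟩⟩ | h | h⟩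
      · exact h.2.1 i j
      · exact h.2.1
      · exact h.2.2.1
    obtain ⟨w, hw⟩ := hz
    obtain ⟨w', hw'⟩ := hzy
    have hwn : w ≠ [] := by
      rintro rfl
      exact hne' (Subtype.ext (by simpa using hw))
    have e : (z.1.getLast z.2) = w.getLast hwn := by
      simp only [← hw]
      exact List.getLast_append_of_ne_nil _ hwn
    have := key (w ++ w') (by rw [← hw', ← hw, List.append_assoc]) (w.getLast hwn)
      (List.mem_append_left _ (List.getLast_mem hwn))
    rw [← e] at this
    exact this.symm

theorem FP_coalg {α : Type} (A : Str V α) : (FP V k A).IsCoalg := GFP_coalg A Eq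

theorem GFP_root {γ : Type} {A : Str V γ} {E : γ → γ → Prop} (x : (GFP V k A E).carrier) :
    (GFP V k A E).IsRoot x ↔ x.1.length = 1 := by
  have hpos := List.length_pos_iff.2 x.2
  constructor
  · intro h
    have := h ⟨x.1.take 1, by
      intro e
      have := congrArg List.length e
      simp only [List.length_take, List.length_nil] at this
      omega⟩ (List.take_prefix _ _)
    have := congrArg (fun z => z.1.length) this
    simp at this
    omega
  · intro h y hy
    have := List.length_pos_iff.2 y.2
    exact Subtype.ext (List.IsPrefix.eq_of_length_le hy (by omega))

theorem GFP_cover {γ : Type} {A : Str V γ} {E : γ → γ → Prop} (x y : (GFP V k A E).carrier) :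
    (GFP V k A E).Cover x y ↔ x.1 <+: y.1 ∧ y.1.length = x.1.length + 1 := by
  have hpos := List.length_pos_iff.2 x.2
  constructor
  · rintro ⟨h1, h2, h3⟩
    refine ⟨h1, ?_⟩
    have hl : x.1.length < y.1.length := by
      rcases lt_or_ge x.1.length y.1.length with h | h
      · exact h
      · exact absurd (Subtype.ext (List.IsPrefix.eq_of_length_le h1 h)) h2
    have := h3 ⟨y.1.take (x.1.length + 1), by
      intro e
      have := congrArg List.length e
      simp only [List.length_take, List.length_nil] at this
      omega⟩ (List.prefix_take_iff.2 ⟨h1, by omega⟩) (List.take_prefix _ _)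
    rcases this with h | h
    · have := congrArg (fun z => z.1.length) h
      simp at this
      omega
    · have := congrArg (fun z => z.1.length) h
      simp at this
      omega
  · rintro ⟨h1, h2⟩
    refine ⟨h1, fun e => by rw [e] at h2; omega, fun z hz hz' => ?_⟩
    have l1 := List.IsPrefix.length_le hz
    have l2 := List.IsPrefix.length_le hz'
    by_cases h : z.1.length = x.1.length
    · exact Or.inl (Subtype.ext (List.IsPrefix.eq_of_length_le hz h.le).symm)
    · exact Or.inr (Subtype.ext (List.IsPrefix.eq_of_length_le hz' (by omega)))

/-- Environment of a list of moves. -/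
def env {α : Type} (l : List (Fin k × α)) : Fin k → Option α :=
  l.foldl (fun e m => Function.update e m.1 (some m.2)) (fun _ => none)

theorem env_nil {α : Type} : env ([] : List (Fin k × α)) = fun _ => none := rfl

theorem env_snoc {α : Type} (l : List (Fin k × α)) (m) :
    env (l ++ [m]) = Function.update (env l) m.1 (some m.2) := by
  simp [env, List.foldl_append]

theorem env_append {α : Type} (l w : List (Fin k × α)) (i) (h : ∀ m ∈ w, m.1 ≠ i) :
    env (l ++ w) i = env l i := by
  induction w using List.reverseRecOn with
  | nil => simp
  | append_singleton w m ih =>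
    rw [← List.append_assoc, env_snoc, Function.update_of_ne (h m (by simp)).symm]
    exact ih fun m hm => h m (by simp [hm])

theorem env_last {α : Type} (l w : List (Fin k × α)) (hl : l ≠ [])
    (h : ∀ m ∈ w, m.1 ≠ (l.getLast hl).1) :
    env (l ++ w) (l.getLast hl).1 = some (l.getLast hl).2 := by
  rw [env_append _ _ _ h]
  have e := env_snoc l.dropLast (l.getLast hl)
  rw [List.dropLast_append_getLast] at e
  rw [e]
  simp

end lists

section backward
variable {V : Vocab} {k : ℕ}
open PObj

theorem FP_root_iff {α : Type} {A : Str V α} (s : (FP V k A).carrier) :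
    (FP V k A).IsRoot s ↔ s.1.length = 1 := GFP_root (E := Eq) s

theorem FP_cover_iff {α : Type} {A : Str V α} (s t : (FP V k A).carrier) :
    (FP V k A).Cover s t ↔ s.1 <+: t.1 ∧ t.1.length = s.1.length + 1 := GFP_cover (E := Eq) s t

theorem FP_root_list {α : Type} {A : Str V α} {s : (FP V k A).carrier}
    (h : (FP V k A).IsRoot s) : s.1 = [((FP V k A).peb s, (s.1.getLast s.2).2)] := by
  rw [FP_root_iff] at h
  obtain ⟨l, hl⟩ := s
  obtain ⟨m, rfl⟩ := List.length_eq_one_iff.1 h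
  simp [FP]

theorem FP_cover_list {α : Type} {A : Str V α} {s t : (FP V k A).carrier}
    (h : (FP V k A).Cover s t) : t.1 = s.1 ++ [((FP V k A).peb t, (t.1.getLast t.2).2)] := by
  rw [FP_cover_iff] at h
  obtain ⟨t, ht⟩ := t
  obtain ⟨⟨w, hw⟩, hl⟩ := h
  dsimp only at hw hl
  subst hw
  have : w.length = 1 := by simpa using hl
  obtain ⟨m, rfl⟩ := List.length_eq_one_iff.1 this
  simp [FP]

def Act (X : PObj V k) (x y : X.carrier) : Prop :=
  X.le x y ∧ ∀ z, X.le x z → z ≠ x → X.le z y → X.peb z ≠ X.peb x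

theorem act_suffix {X : PObj V k} (hX : X.IsCoalg) {α : Type} {A : Str V α}
    {f : X.carrier → (FP V k A).carrier} (hf : IsHom X (FP V k A) f) {x y : X.carrier}
    (h : Act X x y) : ∀ w, (f y).1 = (f x).1 ++ w → ∀ m ∈ w, m.1 ≠ X.peb x := by
  have := hX.ind_le (x₀ := x) (C := fun y => Act X x y → ∀ w, (f y).1 = (f x).1 ++ w →
    ∀ m ∈ w, m.1 ≠ X.peb x) ?_ ?_ y h.1 h
  · exact this
  · intro _ w hw m hm
    have : w = [] := by simpa using hw
    simp [this] at hm
  · intro y z hxy hc ih ha w hw m hm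
    have hay : Act X x y := ⟨hxy, fun t h1 h2 h3 => ha.2 t h1 h2 (hX.2.1 _ _ _ h3 hc.1)⟩
    obtain ⟨w0, hw0⟩ := hf.mono hX (FP_coalg A) hxy
    have e := hw.symm.trans (FP_cover_list (hf.2.2.2.1 _ _ hc))
    rw [← hw0, List.append_assoc] at e
    have e := List.append_cancel_left e
    rw [e, List.mem_append] at hm
    rcases hm with hm | hm
    · exact ih hay w0 hw0.symm m hm
    · rw [List.mem_singleton] at hm
      rw [hm]
      dsimp only
      rw [hf.2.2.2.2]
      refine ha.2 z (hX.2.1 _ _ _ hxy hc.1) ?_ (hX.1 z)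
      rintro rfl
      exact hc.2.1 (hX.2.2.1 _ _ hc.1 hxy)

theorem env_of_act {X : PObj V k} (hX : X.IsCoalg) {α : Type} {A : Str V α}
    {f : X.carrier → (FP V k A).carrier} (hf : IsHom X (FP V k A) f) {x y : X.carrier}
    (h : Act X x y) : env (f y).1 (X.peb x) = some ((f x).1.getLast (f x).2).2 := by
  obtain ⟨w, hw⟩ := hf.mono hX (FP_coalg A) h.1
  have hp : ((f x).1.getLast (f x).2).1 = X.peb x := hf.2.2.2.2 x
  rw [← hw, ← hp]
  apply env_last
  rw [hp]
  exact act_suffix hX hf h w hw.symm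

theorem act_of_env {X : PObj V k} (hX : X.IsCoalg) {α : Type} {A : Str V α}
    {f : X.carrier → (FP V k A).carrier} (hf : IsHom X (FP V k A) f) (x : X.carrier)
    {i : Fin k} {a : α} : env (f x).1 i = some a →
      ∃ y, Act X y x ∧ X.peb y = i ∧ ((f y).1.getLast (f y).2).2 = a := by
  have hself : ∀ x, Act X x x := fun x =>
    ⟨hX.1 x, fun z h1 h2 h3 => absurd (hX.2.2.1 _ _ h3 h1) h2⟩
  refine hX.ind (C := fun x => env (f x).1 i = some a →
      ∃ y, Act X y x ∧ X.peb y = i ∧ ((f y).1.getLast (f y).2).2 = a) ?_ ?_ x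
  · intro x hx he
    by_cases hi : X.peb x = i
    · refine ⟨x, hself x, hi, ?_⟩
      rw [← hi, env_of_act hX hf (hself x)] at he
      exact Option.some.inj he
    · rw [FP_root_list (hf.2.2.1 _ hx), hf.2.2.2.2, ← List.nil_append [_], env_snoc,
        Function.update_of_ne (Ne.symm hi)] at he
      simp [env] at he
  · intro y x hc ih he
    by_cases hi : X.peb x = i
    · refine ⟨x, hself x, hi, ?_⟩
      rw [← hi, env_of_act hX hf (hself x)] at he
      exact Option.some.inj he
    · rw [FP_cover_list (hf.2.2.2.1 _ _ hc), hf.2.2.2.2, env_snoc,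
        Function.update_of_ne (Ne.symm hi)] at he
      obtain ⟨z, hz, hzi, hza⟩ := ih he
      refine ⟨z, ⟨hX.2.1 _ _ _ hz.1 hc.1, fun t h1 h2 h3 => ?_⟩, hzi, hza⟩
      rcases (hX.2.2.2.1 x).2 t y h3 hc.1 with h | h
      · exact hz.2 t h1 h2 h
      · rcases hc.2.2 t h h3 with rfl | rfl
        · exact hz.2 _ h1 h2 (hX.1 _)
        · rw [hzi]; exact hi

theorem act_pair {X : PObj V k} (hX : X.IsCoalg) {α : Type} {A : Str V α}
    {f : X.carrier → (FP V k A).carrier} (hf : IsHom X (FP V k A) f) {x y z : X.carrier}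
    (h : Act X x z) (h' : Act X y z) :
    ((f x).1 <+: (f y).1 ∨ (f y).1 <+: (f x).1) ∧
    (∀ w, (f y).1 = (f x).1 ++ w → ∀ m ∈ w, m.1 ≠ ((f x).1.getLast (f x).2).1) := by
  have hp : ((f x).1.getLast (f x).2).1 = X.peb x := hf.2.2.2.2 x
  rw [hp]
  rcases (hX.2.2.2.1 z).2 x y h.1 h'.1 with hl | hl
  · exact ⟨Or.inl (hf.mono hX (FP_coalg A) hl), act_suffix hX hf
      ⟨hl, fun t h1 h2 h3 => h.2 t h1 h2 (hX.2.1 _ _ _ h3 h'.1)⟩⟩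
  · have hpre : (f y).1 <+: (f x).1 := hf.mono hX (FP_coalg A) hl
    refine ⟨Or.inr hpre, fun w hw m hm => ?_⟩
    have := hpre.length_le
    rw [hw, List.length_append] at this
    have : w = [] := List.length_eq_zero_iff.1 (by omega)
    simp [this] at hm

theorem open_ext {X : PObj V k} (hX : X.IsCoalg) {α : Type} {A : Str V α}
    {f : X.carrier → (FP V k A).carrier} (hf : IsPWEmb X (FP V k A) f)
    (ho : IsOpen X (FP V k A) f) (x : X.carrier) (t : (FP V k A).carrier)
    (ht : (FP V k A).Cover (f x) t) : ∃ y, X.Cover x y ∧ f y = t := by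
  have hY := FP_coalg (k := k) A
  have hle : (FP V k A).le (f x) t := ht.1
  have hP := dn_path hX x
  have hQ := dn_path hY t
  have hm := sub_emb (dn_downC hX x)
  have hn := sub_emb (dn_downC hY t)
  have hfm := hf.2 _ (sub_coalg hX _) hP _ hm
  let i : (X.sub (X.dn x)).carrier → ((FP V k A).sub ((FP V k A).dn t)).carrier :=
    fun z => ⟨f z.1, hY.2.1 _ _ _ (hf.1.mono hX hY z.2) hle⟩
  have hi : IsEmb _ _ i := by
    refine ⟨⟨fun r v h => hfm.1.1 r v h, fun _ _ h => hfm.1.2.1 _ _ h,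
      fun z h => (sub_root (dn_downC hY t) _).2 (hfm.1.2.2.1 z h),
      fun z w h => (sub_cover (dn_downC hY t) _ _).2 (hfm.1.2.2.2.1 z w h),
      fun z => hfm.1.2.2.2.2 z⟩, fun z w h => hfm.2.1 (congrArg Subtype.val h),
      fun r v h => hfm.2.2.1 r v h, fun z w h => hfm.2.2.2 z w h⟩
  obtain ⟨d, hd, hd1, hd2⟩ := ho _ _ (sub_coalg hX _) hP (sub_coalg hY _) hQ i _ _ hi hm hn
    (fun _ => rfl)
  refine ⟨d ⟨t, hY.1 t⟩, ?_, hd2 _⟩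
  have := hd.2.2.2.1 (i ⟨x, hX.1 x⟩) ⟨t, hY.1 t⟩ ((sub_cover (dn_downC hY t) _ _).2 ht)
  have e := hd1 ⟨x, hX.1 x⟩
  dsimp only at e
  exact e ▸ this

theorem open_root (har : ∀ r : V.Rel, V.ar r ≠ 0) {X : PObj V k} {α : Type} {A : Str V α}
    {f : X.carrier → (FP V k A).carrier}
    (ho : IsOpen X (FP V k A) f) (t : (FP V k A).carrier)
    (ht : (FP V k A).IsRoot t) : ∃ y, X.IsRoot y ∧ f y = t := by
  have hY := FP_coalg (k := k) A
  have hQ := dn_path hY t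
  have hn := sub_emb (dn_downC hY t)
  let P : PObj V k := ⟨Empty, fun _ _ => False, fun _ _ => False, fun _ _ => True, Empty.elim⟩
  have hP : IsCoalg P := ⟨fun x => x.elim, fun x => x.elim, fun x => x.elim, fun x => x.elim,
    fun x => x.elim, fun x => x.elim⟩
  have hPp : IsPath P := ⟨inferInstanceAs (Finite Empty), fun x => x.elim⟩
  have hE : ∀ (r : V.Rel), (Fin (V.ar r) → P.carrier) → V.ar r = 0 := fun r v => by
    by_contra h
    exact (v ⟨0, Nat.pos_of_ne_zero h⟩).elim
  have hany : ∀ (Y : PObj V k) (g : P.carrier → Y.carrier), IsEmb P Y g := fun Y g =>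
    ⟨⟨fun r v h => h.elim, fun x => x.elim, fun x => x.elim, fun x => x.elim, fun x => x.elim⟩,
      fun x => x.elim, fun r v _ => har r (hE r v), fun x => x.elim⟩
  obtain ⟨d, hd, hd1, hd2⟩ := ho P _ hP hPp (sub_coalg hY _) hQ
    (fun x => x.elim) (fun x => x.elim) _ (hany _ _) (hany _ _) hn (fun x => x.elim)
  · refine ⟨d ⟨t, hY.1 t⟩, ?_, hd2 _⟩
    exact hd.2.2.1 _ ((sub_root (dn_downC hY t) _).2 ht)

theorem transfer {α β : Type} (A : Str V α) (B : Str V β)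
    (Pos : List (Fin k × α) → List (Fin k × β) → Prop)
    (forth : ∀ la lb, Pos la lb → ∀ i a, ∃ b, Pos (la ++ [(i, a)]) (lb ++ [(i, b)]))
    (back : ∀ la lb, Pos la lb → ∀ i b, ∃ a, Pos (la ++ [(i, a)]) (lb ++ [(i, b)]))
    (hrel : ∀ la lb, Pos la lb → ∀ r v, (PLFml.rel r v : PLFml V k).Sat A (env la) →
      (PLFml.rel r v : PLFml V k).Sat B (env lb))
    (heq : ∀ la lb, Pos la lb → ∀ i j, (PLFml.eq i j : PLFml V k).Sat A (env la) →
      (PLFml.eq i j : PLFml V k).Sat B (env lb))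
    (φ : PLFml V k) : ∀ la lb, Pos la lb → φ.Sat A (env la) → φ.Sat B (env lb) := by
  induction φ with
  | rel r v => exact fun la lb h => hrel la lb h r v
  | eq i j => exact fun la lb h => heq la lb h i j
  | iand ι f ih => exact fun la lb h hs x => ih x la lb h (hs x)
  | ior ι f ih => exact fun la lb h ⟨x, hx⟩ => ⟨x, ih x la lb h hx⟩
  | ex i φ ih =>
    rintro la lb h ⟨a, ha⟩
    obtain ⟨b, hb⟩ := forth la lb h i a
    refine ⟨b, ?_⟩
    have := ih _ _ hb
    rw [env_snoc, env_snoc] at this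
    exact this ha
  | all i φ ih =>
    intro la lb h hs b
    obtain ⟨a, ha⟩ := back la lb h i b
    have := ih _ _ ha
    rw [env_snoc, env_snoc] at this
    exact this (hs a)

theorem span_transfer (har : ∀ r : V.Rel, V.ar r ≠ 0) {α β : Type} {A : Str V α} {B : Str V β}
    {Z : PObj V k} (hZ : Z.IsCoalg) {p : Z.carrier → (FP V k A).carrier}
    {q : Z.carrier → (FP V k B).carrier} (hp : IsPWEmb Z (FP V k A) p)
    (hpo : IsOpen Z (FP V k A) p) (hq : BijThenOpenP V k Z (FP V k B) q) (φ : PLFml V k)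
    (h : φ.Sat A (fun _ => none)) : φ.Sat B (fun _ => none) := by
  obtain ⟨W, hW, u, v, hu, hub, hv, hvo, hquv⟩ := hq
  have hqh : IsHom Z (FP V k B) q := by
    have : q = fun z => v (u z) := funext hquv
    rw [this]
    exact hu.comp hv.1
  refine transfer A B (fun la lb => (la = [] ∧ lb = []) ∨ ∃ z, (p z).1 = la ∧ (q z).1 = lb)
    ?_ ?_ ?_ ?_ φ [] [] (Or.inl ⟨rfl, rfl⟩) h
  · rintro la lb (⟨rfl, rfl⟩ | ⟨z, rfl, rfl⟩) i a
    · obtain ⟨z, hz, hz'⟩ := open_root har hpo ⟨[(i, a)], by simp⟩ ((FP_root_iff _).2 rfl)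
      have hi : Z.peb z = i := by rw [← hp.1.2.2.2.2 z, hz']; rfl
      have e := FP_root_list (hqh.2.2.1 _ hz)
      rw [hqh.2.2.2.2, hi] at e
      exact ⟨_, Or.inr ⟨z, by rw [hz']; rfl, e⟩⟩
    · obtain ⟨y, hy, hy'⟩ := open_ext hZ hp hpo z ⟨(p z).1 ++ [(i, a)], by simp⟩
        ((FP_cover_iff _ _).2 (by simp))
      have hi : Z.peb y = i := by rw [← hp.1.2.2.2.2 y, hy']; simp [FP]
      have e := FP_cover_list (hqh.2.2.2.1 _ _ hy)
      rw [hqh.2.2.2.2, hi] at e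
      exact ⟨_, Or.inr ⟨y, by rw [hy'], e⟩⟩
  · rintro la lb (⟨rfl, rfl⟩ | ⟨z, rfl, rfl⟩) i b
    · obtain ⟨w, hw, hw'⟩ := open_root har hvo ⟨[(i, b)], by simp⟩ ((FP_root_iff _).2 rfl)
      obtain ⟨z, rfl⟩ := hub.2 w
      rw [← hquv] at hw'
      have hz : Z.IsRoot z := fun y hy => hub.1 (hw _ (hu.mono hZ hW hy))
      have hi : Z.peb z = i := by rw [← hqh.2.2.2.2 z, hw']; rfl
      have e := FP_root_list (hp.1.2.2.1 _ hz)
      rw [hp.1.2.2.2.2, hi] at e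
      exact ⟨_, Or.inr ⟨z, e, by rw [hw']; rfl⟩⟩
    · obtain ⟨w, hw, hw'⟩ := open_ext hW hv hvo (u z) ⟨(q z).1 ++ [(i, b)], by simp⟩
        ((FP_cover_iff _ _).2 (by simp [hquv]))
      obtain ⟨y, rfl⟩ := hub.2 w
      rw [← hquv] at hw'
      have hyr : ¬ Z.IsRoot y := fun h => hw.2.1 (hu.2.2.1 _ h _ hw.1)
      simp only [IsRoot, not_forall] at hyr
      obtain ⟨x, hx, hne⟩ := hyr
      obtain ⟨x, -, hc⟩ := hZ.exists_pred hx hne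
      have hc' := hu.2.2.2.1 _ _ hc
      have hxz : x = z := by
        apply hub.1
        rcases (hW.2.2.2.1 (u y)).2 _ _ hc'.1 hw.1 with h | h
        · rcases hc'.2.2 _ h hw.1 with h | h
          · exact h.symm
          · exact absurd h hw.2.1
        · rcases hw.2.2 _ h hc'.1 with h | h
          · exact h
          · exact absurd h hc'.2.1
      subst hxz
      have hi : Z.peb y = i := by rw [← hqh.2.2.2.2 y, hw']; simp [FP]
      have e := FP_cover_list (hp.1.2.2.2.1 _ _ hc)
      rw [hp.1.2.2.2.2, hi] at e
      exact ⟨_, Or.inr ⟨y, e, by rw [hw']⟩⟩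
  · rintro la lb (⟨rfl, rfl⟩ | ⟨z, rfl, rfl⟩) r s ⟨g, hg, hr⟩
    · have := hg ⟨0, Nat.pos_of_ne_zero (har r)⟩
      simp [env] at this
    · choose y hy1 hy2 hy3 using fun i => act_of_env hZ hp.1 z (hg i)
      have h1 : (FP V k A).rel r (fun i => p (y i)) := by
        refine ⟨fun i j => (act_pair hZ hp.1 (hy1 i) (hy1 j)).1,
          fun i j => (act_pair hZ hp.1 (hy1 i) (hy1 j)).2, ?_⟩
        simp only [hy3]
        exact hr
      have h2 : Z.rel r y := (hp.2 _ (sub_coalg hZ _) (dn_path hZ z) _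
        (sub_emb (dn_downC hZ z))).2.2.1 r (fun i => ⟨y i, (hy1 i).1⟩) h1
      refine ⟨_, fun i => ?_, (hqh.1 r y h2).2.2⟩
      rw [← hy2 i]
      exact env_of_act hZ hqh (hy1 i)
  · rintro la lb (⟨rfl, rfl⟩ | ⟨z, rfl, rfl⟩) i j ⟨g, hg, hg'⟩
    · simp [env] at hg
    · obtain ⟨x, hx1, hx2, hx3⟩ := act_of_env hZ hp.1 z hg
      obtain ⟨y, hy1, hy2, hy3⟩ := act_of_env hZ hp.1 z hg'
      have h1 : (FP V k A).ieq (p x) (p y) :=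
        ⟨(act_pair hZ hp.1 hx1 hy1).1, (act_pair hZ hp.1 hx1 hy1).2,
          (act_pair hZ hp.1 hy1 hx1).2, hx3.trans hy3.symm⟩
      have h2 : Z.ieq x y := (hp.2 _ (sub_coalg hZ _) (dn_path hZ z) _
        (sub_emb (dn_downC hZ z))).2.2.2 ⟨x, hx1.1⟩ ⟨y, hy1.1⟩ h1
      have h3 := (hqh.2.1 _ _ h2).2.2.2
      refine ⟨((q x).1.getLast (q x).2).2, ?_, ?_⟩
      · rw [← hx2]
        exact env_of_act hZ hqh hx1
      · rw [← hy2, h3]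
        exact env_of_act hZ hqh hy1

end backward

section forward
variable {V : Vocab} {k : ℕ}
open PObj

def pull {α γ : Type} (A : Str V α) (π : γ → α) : Str V γ := ⟨fun r g => A.rel r fun i => π (g i)⟩

/-- Pullback of the cofree coalgebra to a tree. -/
def TO {α γ : Type} (A : Str V α) (π : γ → α) (T : Set (List (Fin k × γ))) : PObj V k :=
  (GFP V k (pull A π) (fun x y => π x = π y)).sub {s | s.1 ∈ T}

def mpl {α γ : Type} (π : γ → α) (l : List (Fin k × γ)) : List (Fin k × α) :=
  l.map (Prod.map id π)

theorem mpl_ne {α γ : Type} (π : γ → α) {l : List (Fin k × γ)} (h : l ≠ []) : mpl π l ≠ [] := by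
  simpa [mpl] using h

theorem mpl_last {α γ : Type} (π : γ → α) {l : List (Fin k × γ)} (h : l ≠ []) :
    (mpl π l).getLast (mpl_ne π h) = Prod.map id π (l.getLast h) := by
  simp [mpl, List.getLast_map]

theorem mpl_length {α γ : Type} (π : γ → α) (l : List (Fin k × γ)) :
    (mpl π l).length = l.length := by simp [mpl]

theorem mpl_append {α γ : Type} (π : γ → α) (l w : List (Fin k × γ)) :
    mpl π (l ++ w) = mpl π l ++ mpl π w := by simp [mpl]

def mpf {α γ : Type} (A : Str V α) (π : γ → α) (T : Set (List (Fin k × γ)))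
    (s : (TO A π T).carrier) : (FP V k A).carrier := ⟨mpl π s.1.1, mpl_ne π s.1.2⟩

theorem mpl_act {α γ : Type} (π : γ → α) {s t : List (Fin k × γ)} (hs : s ≠ [])
    (hc : s <+: t ∨ t <+: s) :
    (∀ w, mpl π t = mpl π s ++ w → ∀ m ∈ w, m.1 ≠ ((mpl π s).getLast (mpl_ne π hs)).1) ↔
    (∀ w, t = s ++ w → ∀ m ∈ w, m.1 ≠ (s.getLast hs).1) := by
  rw [mpl_last π hs]
  constructor
  · rintro h w rfl m hm
    exact h (mpl π w) (mpl_append _ _ _) (Prod.map id π m) (List.mem_map_of_mem hm)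
  · intro h w hw m hm
    rcases hc with ⟨w', rfl⟩ | hc
    · rw [mpl_append] at hw
      have := List.append_cancel_left hw
      subst this
      obtain ⟨m', hm', rfl⟩ := List.mem_map.1 hm
      exact h w' rfl m' hm'
    · have h1 := hc.length_le
      have h2 := congrArg List.length hw
      simp only [mpl_length, List.length_append] at h2
      have : w = [] := List.length_eq_zero_iff.1 (by omega)
      simp [this] at hm

theorem mpl_prefix {α γ : Type} (π : γ → α) {s t : List (Fin k × γ)} (h : s <+: t) :
    mpl π s <+: mpl π t := h.map _

variable {α γ : Type} {A : Str V α} {π : γ → α} {T : Set (List (Fin k × γ))}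

theorem TO_coalg : (TO A π T).IsCoalg := sub_coalg (GFP_coalg _ _) _

theorem TO_rel (r : V.Rel) (v : Fin (V.ar r) → (TO A π T).carrier) :
    (TO A π T).rel r v ↔ (∀ i j, (v i).1.1 <+: (v j).1.1 ∨ (v j).1.1 <+: (v i).1.1) ∧
      (FP V k A).rel r (fun i => mpf A π T (v i)) := by
  constructor
  · rintro ⟨h1, h2, h3⟩
    refine ⟨h1, fun i j => (h1 i j).imp (mpl_prefix π) (mpl_prefix π),
      fun i j => (mpl_act π (v i).1.2 (h1 i j)).2 (h2 i j), ?_⟩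
    simp only [mpf, mpl_last _ (v _).1.2]
    exact h3
  · rintro ⟨h1, -, h2, h3⟩
    refine ⟨h1, fun i j => (mpl_act π (v i).1.2 (h1 i j)).1 (h2 i j), ?_⟩
    simp only [mpf, mpl_last _ (v _).1.2] at h3
    exact h3

theorem TO_ieq (s t : (TO A π T).carrier) :
    (TO A π T).ieq s t ↔ (s.1.1 <+: t.1.1 ∨ t.1.1 <+: s.1.1) ∧
      (FP V k A).ieq (mpf A π T s) (mpf A π T t) := by
  constructor
  · rintro ⟨h1, h2, h3, h4⟩
    refine ⟨h1, h1.imp (mpl_prefix π) (mpl_prefix π), (mpl_act π s.1.2 h1).2 h2,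
      (mpl_act π t.1.2 h1.symm).2 h3, ?_⟩
    simp only [mpf, mpl_last _ s.1.2, mpl_last _ t.1.2]
    exact h4
  · rintro ⟨h1, -, h2, h3, h4⟩
    refine ⟨h1, (mpl_act π s.1.2 h1).1 h2, (mpl_act π t.1.2 h1.symm).1 h3, ?_⟩
    simp only [mpf, mpl_last _ s.1.2, mpl_last _ t.1.2] at h4
    exact h4

theorem TO_root (hT : ∀ s t : List (Fin k × γ), s <+: t → t ∈ T → s ∈ T)
    (s : (TO A π T).carrier) : (TO A π T).IsRoot s ↔ s.1.1.length = 1 := by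
  rw [← GFP_root (A := pull A π) (E := fun x y => π x = π y)]
  exact sub_root (X := GFP V k (pull A π) (fun x y => π x = π y)) (fun x y h h' => hT _ _ h h') s

theorem TO_cover (hT : ∀ s t : List (Fin k × γ), s <+: t → t ∈ T → s ∈ T)
    (s t : (TO A π T).carrier) :
    (TO A π T).Cover s t ↔ s.1.1 <+: t.1.1 ∧ t.1.1.length = s.1.1.length + 1 := by
  rw [← GFP_cover (A := pull A π) (E := fun x y => π x = π y)]
  exact sub_cover (X := GFP V k (pull A π) (fun x y => π x = π y)) (fun x y h h' => hT _ _ h h') s t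

theorem mpf_hom (hT : ∀ s t : List (Fin k × γ), s <+: t → t ∈ T → s ∈ T) :
    IsHom (TO A π T) (FP V k A) (mpf A π T) := by
  refine ⟨fun r v h => ((TO_rel r v).1 h).2, fun x y h => ((TO_ieq x y).1 h).2, fun x h => ?_,
    fun x y h => ?_, fun x => ?_⟩
  · rw [TO_root hT] at h
    rw [FP_root_iff]
    simpa [mpf, mpl_length] using h
  · rw [TO_cover hT] at h
    rw [FP_cover_iff]
    exact ⟨mpl_prefix π h.1, by simpa [mpf, mpl_length] using h.2⟩
  · simp only [FP, mpf, mpl_last _ x.1.2]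
    rfl

theorem mpf_pw (hT : ∀ s t : List (Fin k × γ), s <+: t → t ∈ T → s ∈ T) :
    IsPWEmb (TO A π T) (FP V k A) (mpf A π T) := by
  refine ⟨mpf_hom hT, fun P hP hPp m hm => ⟨hm.1.comp (mpf_hom hT), ?_, ?_, ?_⟩⟩
  all_goals
    have hc : ∀ x y, (m x).1.1 <+: (m y).1.1 ∨ (m y).1.1 <+: (m x).1.1 := fun x y =>
      (hPp.2 x y).imp (hm.1.mono hP TO_coalg) (hm.1.mono hP TO_coalg)
  · intro x y h
    apply hm.2.1
    have hl : (m x).1.1.length = (m y).1.1.length := by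
      have := congrArg (fun z => z.1.length) h
      simpa [mpf, mpl_length] using this
    apply Subtype.ext
    apply Subtype.ext
    rcases hc x y with h | h
    · exact h.eq_of_length hl
    · exact (h.eq_of_length hl.symm).symm
  · intro r v h
    exact hm.2.2.1 r v ((TO_rel _ _).2 ⟨fun i j => hc _ _, h⟩)
  · intro x y h
    exact hm.2.2.2 x y ((TO_ieq _ _).2 ⟨hc _ _, h⟩)

theorem ext_list (hE : ∀ t ∈ T, ∀ i a, ∃ c, π c = a ∧ t ++ [(i, c)] ∈ T) (t₀) (ht₀ : t₀ ∈ T)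
    (w : List (Fin k × α)) : ∃ t ∈ T, t₀ <+: t ∧ mpl π t = mpl π t₀ ++ w := by
  induction w using List.reverseRecOn with
  | nil => exact ⟨t₀, ht₀, List.prefix_rfl, by simp⟩
  | append_singleton w m ih =>
    obtain ⟨t, ht, hp, he⟩ := ih
    obtain ⟨c, hc, hc'⟩ := hE t ht m.1 m.2
    refine ⟨_, hc', hp.trans (List.prefix_append _ _), ?_⟩
    rw [mpl_append, he, List.append_assoc]
    simp [mpl, hc]

theorem mpf_open (hT : ∀ s t : List (Fin k × γ), s <+: t → t ∈ T → s ∈ T) (h0 : [] ∈ T)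
    (hE : ∀ t ∈ T, ∀ i a, ∃ c, π c = a ∧ t ++ [(i, c)] ∈ T) :
    IsOpen (TO A π T) (FP V k A) (mpf A π T) := by
  intro P Q hP hPp hQ hQp i m n hi hm hn hcomm
  have hY := FP_coalg (k := k) A
  obtain ⟨t, ht, hmt, hnt⟩ : ∃ t ∈ T, (∀ x, (m x).1.1 <+: t) ∧ ∀ q, (n q).1 <+: mpl π t := by
    rcases isEmpty_or_nonempty Q.carrier with hQe | hQe
    · exact ⟨[], h0, fun x => (hQe.false (i x)).elim, fun q => (hQe.false q).elim⟩
    · obtain ⟨qm, hqm⟩ := hQp.exists_max hQ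
      have hq : ∀ q, (n q).1 <+: (n qm).1 := fun q => hn.1.mono hQ hY (hqm q)
      obtain ⟨t₀, ht₀, hm₀, w, hw⟩ : ∃ t₀ ∈ T, (∀ x, (m x).1.1 <+: t₀) ∧
          mpl π t₀ <+: (n qm).1 := by
        rcases isEmpty_or_nonempty P.carrier with hPe | hPe
        · exact ⟨[], h0, fun x => (hPe.false x).elim, List.nil_prefix⟩
        · obtain ⟨pm, hpm⟩ := hPp.exists_max hP
          refine ⟨(m pm).1.1, (m pm).2, fun x => hm.1.mono hP TO_coalg (hpm x), ?_⟩
          have := hq (i pm)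
          rw [hcomm] at this
          exact this
      obtain ⟨t, ht, hp, he⟩ := ext_list hE t₀ ht₀ w
      refine ⟨t, ht, fun x => (hm₀ x).trans hp, fun q => ?_⟩
      rw [he, hw]
      exact hq q
  let d : Q.carrier → (TO A π T).carrier := fun q =>
    ⟨⟨t.take (n q).1.length, by
      intro e
      have h1 := congrArg List.length e
      have h2 := (hnt q).length_le
      have h3 := List.length_pos_iff.2 (n q).2
      simp only [List.length_take, List.length_nil, mpl_length] at h1 h2
      omega⟩, hT _ _ (List.take_prefix _ _) ht⟩
  have hdl : ∀ q, (d q).1.1.length = (n q).1.length := fun q => by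
    have h2 := (hnt q).length_le
    rw [mpl_length] at h2
    simp only [d, List.length_take]
    omega
  have hdt : ∀ q, (d q).1.1 <+: t := fun q => List.take_prefix _ _
  have hdc : ∀ q q', (d q).1.1 <+: (d q').1.1 ∨ (d q').1.1 <+: (d q).1.1 := fun q q' =>
    List.prefix_or_prefix_of_prefix (hdt q) (hdt q')
  have hfd : ∀ q, mpf A π T (d q) = n q := fun q => by
    apply Subtype.ext
    apply List.IsPrefix.eq_of_length
    · exact List.prefix_of_prefix_length_le (mpl_prefix π (hdt q)) (hnt q)
        (by simp only [mpf, mpl_length, hdl]; exact le_rfl)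
    · simp only [mpf, mpl_length, hdl]
  refine ⟨d, ⟨fun r v h => ?_, fun x y h => ?_, fun x h => ?_, fun x y h => ?_, fun x => ?_⟩,
    fun x => ?_, hfd⟩
  · refine (TO_rel _ _).2 ⟨fun i j => hdc _ _, ?_⟩
    simp only [hfd]
    exact hn.1.1 r v h
  · refine (TO_ieq _ _).2 ⟨hdc _ _, ?_⟩
    simp only [hfd]
    exact hn.1.2.1 _ _ h
  · rw [TO_root hT, hdl]
    exact (FP_root_iff _).1 (hn.1.2.2.1 x h)
  · have h' := (FP_cover_iff _ _).1 (hn.1.2.2.2.1 x y h)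
    rw [TO_cover hT, hdl, hdl]
    refine ⟨List.prefix_of_prefix_length_le (hdt x) (hdt y) ?_, h'.2⟩
    rw [hdl, hdl]
    omega
  · rw [← hn.1.2.2.2.2 x, ← hfd, (mpf_hom hT).2.2.2.2]
  · have hl : (d (i x)).1.1.length = (m x).1.1.length := by
      rw [hdl, hcomm]
      exact mpl_length _ _
    apply Subtype.ext
    apply Subtype.ext
    exact (List.prefix_of_prefix_length_le (hdt _) (hmt x) hl.le).eq_of_length hl

end forward

section main
variable {V : Vocab} {k : ℕ}
open PObj

/-- Positive type inclusion. -/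
def RR {α β : Type} (A : Str V α) (B : Str V β) (e : Fin k → Option α) (e' : Fin k → Option β) :
    Prop := ∀ φ : PLFml V k, φ.freeVars ⊆ {i | e i ≠ none} → φ.Sat A e → φ.Sat B e'

theorem fv_upd {α : Type} {e : Fin k → Option α} {i : Fin k} {a : α} {S : Set (Fin k)}
    (h : S ⊆ {j | Function.update e i (some a) j ≠ none}) : S \ {i} ⊆ {j | e j ≠ none} := by
  rintro j ⟨hj, hji⟩
  have := h hj
  rw [Set.mem_setOf_eq, Function.update_of_ne (by simpa using hji)] at this
  exact this

theorem RR_forth {α β : Type} {A : Str V α} {B : Str V β} {e : Fin k → Option α}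
    {e' : Fin k → Option β} (h : RR A B e e') (i : Fin k) (a : α) :
    ∃ b, RR A B (Function.update e i (some a)) (Function.update e' i (some b)) := by
  by_contra hc
  simp only [RR, not_exists, not_forall] at hc
  choose φ h1 h2 h3 using hc
  obtain ⟨b, hb⟩ := h (.ex i (.iand β φ)) (by
    simp only [PLFml.freeVars]
    exact fv_upd (a := a) (Set.iUnion_subset h1)) ⟨a, fun b => h2 b⟩
  exact h3 b (hb b)

theorem RR_back {α β : Type} {A : Str V α} {B : Str V β} {e : Fin k → Option α}
    {e' : Fin k → Option β} (h : RR A B e e') (i : Fin k) (b : β) :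
    ∃ a, RR A B (Function.update e i (some a)) (Function.update e' i (some b)) := by
  by_contra hc
  simp only [RR, not_exists, not_forall] at hc
  choose φ h1 h2 h3 using hc
  obtain ⟨a, ha⟩ := h (.all i (.ior α φ)) (by
    simp only [PLFml.freeVars]
    rw [Set.iUnion_diff]
    exact Set.iUnion_subset fun a => fv_upd (h1 a)) (fun a => ⟨a, h2 a⟩) b
  exact h3 a ha

/-- The tree of winning plays. -/
def TT {α β : Type} (A : Str V α) (B : Str V β) : Set (List (Fin k × (α × β))) :=
  {l | ∀ s, s <+: l → RR A B (env (mpl Prod.fst s)) (env (mpl Prod.snd s))}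

theorem TT_snoc {α β : Type} {A : Str V α} {B : Str V β} {l : List (Fin k × (α × β))}
    (hl : l ∈ TT A B) (i : Fin k) (a : α) (b : β)
    (h : RR A B (Function.update (env (mpl Prod.fst l)) i (some a))
      (Function.update (env (mpl Prod.snd l)) i (some b))) : l ++ [(i, (a, b))] ∈ TT A B := by
  intro s hs
  rcases List.prefix_concat_iff.1 hs with rfl | hs
  · rw [mpl_append, mpl_append]
    have e1 : mpl Prod.fst [(i, (a, b))] = [(i, a)] := rfl
    have e2 : mpl Prod.snd [(i, (a, b))] = [(i, b)] := rfl
    rw [e1, e2, env_snoc, env_snoc]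
    exact h
  · exact hl s hs

theorem env_mpl {α γ : Type} (π : γ → α) {s t : List (Fin k × γ)} (hs : s ≠ []) (h : s <+: t)
    (ha : ∀ w, t = s ++ w → ∀ m ∈ w, m.1 ≠ (s.getLast hs).1) :
    env (mpl π t) (s.getLast hs).1 = some (π (s.getLast hs).2) := by
  have hact := (mpl_act π hs (Or.inl h)).2 ha
  obtain ⟨w, rfl⟩ := h
  have := env_last (mpl π s) (mpl π w) (mpl_ne π hs) (hact _ (mpl_append _ _ _))
  rw [mpl_append]
  simpa [mpl_last π hs] using this

theorem span_exists (har : ∀ r : V.Rel, V.ar r ≠ 0) {α β : Type} (A : Str V α) (B : Str V β)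
    (h : RR (k := k) A B (fun _ => none) (fun _ => none)) :
    ∃ Z : PObj V k, Z.IsCoalg ∧ ∃ (p : Z.carrier → (FP V k A).carrier)
      (q : Z.carrier → (FP V k B).carrier), IsPWEmb Z (FP V k A) p ∧ IsOpen Z (FP V k A) p ∧
        BijThenOpenP V k Z (FP V k B) q := by
  have hT : ∀ s t : List (Fin k × (α × β)), s <+: t → t ∈ TT A B → s ∈ TT A B :=
    fun s t h ht s' hs' => ht s' (hs'.trans h)
  have h0 : ([] : List (Fin k × (α × β))) ∈ TT A B := by
    intro s hs
    rw [List.prefix_nil.1 hs]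
    exact h
  have hE1 : ∀ t ∈ TT (k := k) A B, ∀ i a, ∃ c : α × β, c.1 = a ∧ t ++ [(i, c)] ∈ TT A B := by
    intro t ht i a
    obtain ⟨b, hb⟩ := RR_forth (ht t List.prefix_rfl) i a
    exact ⟨(a, b), rfl, TT_snoc ht i a b hb⟩
  have hE2 : ∀ t ∈ TT (k := k) A B, ∀ i b, ∃ c : α × β, c.2 = b ∧ t ++ [(i, c)] ∈ TT A B := by
    intro t ht i b
    obtain ⟨a, ha⟩ := RR_back (ht t List.prefix_rfl) i b
    exact ⟨(a, b), rfl, TT_snoc ht i a b ha⟩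
  refine ⟨TO A Prod.fst (TT A B), TO_coalg, mpf A _ _, mpf B Prod.snd (TT A B), mpf_pw hT,
    mpf_open hT h0 hE1, TO B Prod.snd (TT A B), TO_coalg, id, mpf B _ _, ?_,
    Function.bijective_id, mpf_pw hT, mpf_open hT h0 hE2, fun _ => rfl⟩
  refine ⟨?_, ?_, ?_, ?_, fun _ => rfl⟩
  · rintro r v ⟨h1, h2, h3⟩
    refine ⟨h1, h2, ?_⟩
    have : Nonempty (Fin (V.ar r)) := ⟨⟨0, Nat.pos_of_ne_zero (har r)⟩⟩
    obtain ⟨j, hj⟩ := Finite.exists_max (fun i => (v i).1.1.length)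
    have hpre : ∀ i, (v i).1.1 <+: (v j).1.1 := fun i => by
      rcases h1 i j with h | h
      · exact h
      · have := h.eq_of_length_le (hj i)
        rw [this]
    have hR := (v j).2 _ List.prefix_rfl
    have e1 := fun i => env_mpl Prod.fst (v i).1.2 (hpre i) (h2 i j)
    have e2 := fun i => env_mpl Prod.snd (v i).1.2 (hpre i) (h2 i j)
    obtain ⟨g, hg, hr⟩ := hR (.rel r fun i => ((v i).1.1.getLast (v i).1.2).1) (by
      rintro _ ⟨i, rfl⟩
      rw [Set.mem_setOf_eq, e1 i]
      simp) ⟨_, e1, h3⟩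
    have : g = fun i => ((v i).1.1.getLast (v i).1.2).2.2 := by
      funext i
      have := hg i
      rw [e2 i] at this
      exact (Option.some.inj this).symm
    rw [this] at hr
    exact hr
  · rintro x y ⟨h1, h2, h3, h4⟩
    refine ⟨h1, h2, h3, ?_⟩
    have hself : ∀ z : List (Fin k × (α × β)), ∀ hz : z ≠ [], 
        ∀ w, z = z ++ w → ∀ m ∈ w, m.1 ≠ (z.getLast hz).1 := by
      intro z hz w hw m hm
      have : w = [] := by simpa using hw
      simp [this] at hm
    have key : ∀ t ∈ TT (k := k) A B, x.1.1 <+: t → y.1.1 <+: t →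
        (∀ w, t = x.1.1 ++ w → ∀ m ∈ w, m.1 ≠ (x.1.1.getLast x.1.2).1) →
        (∀ w, t = y.1.1 ++ w → ∀ m ∈ w, m.1 ≠ (y.1.1.getLast y.1.2).1) →
        (x.1.1.getLast x.1.2).2.2 = (y.1.1.getLast y.1.2).2.2 := by
      intro t ht hx hy hx' hy'
      have ex1 := env_mpl Prod.fst x.1.2 hx hx'
      have ex2 := env_mpl Prod.snd x.1.2 hx hx'
      have ey1 := env_mpl Prod.fst y.1.2 hy hy'
      have ey2 := env_mpl Prod.snd y.1.2 hy hy'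
      obtain ⟨b, hb1, hb2⟩ := ht t List.prefix_rfl
        (.eq (x.1.1.getLast x.1.2).1 (y.1.1.getLast y.1.2).1) (by
          rintro _ (rfl | rfl)
          · rw [Set.mem_setOf_eq, ex1]; simp
          · rw [Set.mem_setOf_eq, ey1]; simp) ⟨_, ex1, by rw [ey1]; exact congrArg some h4.symm⟩
      rw [ex2] at hb1
      rw [ey2] at hb2
      exact Option.some.inj (hb1.trans hb2.symm)
    rcases h1 with h | h
    · exact key y.1.1 y.2 h List.prefix_rfl h2 (hself _ _)
    · exact key x.1.1 x.2 List.prefix_rfl h (hself _ _) h3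
  · intro x hx
    exact (TO_root hT _).2 ((TO_root hT _).1 hx)
  · intro x y hx
    exact (TO_cover hT _ _).2 ((TO_cover hT _ _).1 hx)

end main

/-- `A` and `B` satisfy the same sentences of `⁺L^k` if, and only if,
there are objects `Z, Z′` of `EM(P_k^I)` and morphisms `p : Z → F_k^I(A)`,
`q : Z → F_k^I(B)`, `p′ : Z′ → F_k^I(B)`, `q′ : Z′ → F_k^I(A)` such that `p, p′` are
open pathwise embeddings and `q, q′` are compositions of a bijection followed by an
open pathwise embedding. -/
theorem positive_Lk_equivalence_iff_spans
    (V : Vocab) [Finite V.Rel] (har : ∀ r : V.Rel, V.ar r ≠ 0)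
    {α β : Type} [Nonempty α] [Nonempty β] (A : Str V α) (B : Str V β)
    (k : ℕ) (hk : 0 < k) :
    (∀ φ : PLFml V k, φ.freeVars = ∅ →
        (φ.Sat A (fun _ => none) ↔ φ.Sat B (fun _ => none))) ↔
      ∃ Z Z' : PObj V k, PObj.IsCoalg Z ∧ PObj.IsCoalg Z' ∧
        ∃ (p : Z.carrier → (FP V k A).carrier) (q : Z.carrier → (FP V k B).carrier)
          (p' : Z'.carrier → (FP V k B).carrier) (q' : Z'.carrier → (FP V k A).carrier),
          PObj.IsPWEmb Z (FP V k A) p ∧ PObj.IsOpen Z (FP V k A) p ∧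
          BijThenOpenP V k Z (FP V k B) q ∧
          PObj.IsPWEmb Z' (FP V k B) p' ∧ PObj.IsOpen Z' (FP V k B) p' ∧
          BijThenOpenP V k Z' (FP V k A) q' := by
  constructor
  · intro h
    obtain ⟨Z, hZ, p, q, hp, hpo, hq⟩ := span_exists (k := k) har A B
      (fun φ hφ => (h φ (Set.subset_empty_iff.1 (fun i hi => hφ hi rfl))).1)
    obtain ⟨Z', hZ', p', q', hp', hpo', hq'⟩ := span_exists (k := k) har B A
      (fun φ hφ => (h φ (Set.subset_empty_iff.1 (fun i hi => hφ hi rfl))).2)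
    exact ⟨Z, Z', hZ, hZ', p, q, p', q', hp, hpo, hq, hp', hpo', hq'⟩
  · rintro ⟨Z, Z', hZ, hZ', p, q, p', q', hp, hpo, hq, hp', hpo', hq'⟩ φ -
    exact ⟨span_transfer har hZ hp hpo hq φ, span_transfer har hZ' hp' hpo' hq' φ⟩
end
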